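/- arXiv:1503.02862 — 3 statements merged into one kernel-verified Lean document; each statement's English description precedes it below -/
import Mathlib

section
/- With U the Poisson extension of w(x) = (1 + |x|²)^{−(n−2γ)/2} as defined in the context, one has ∫_{ℝ^{n+1}_+} y^{a+3}·(|∇_x U|² + (∂_y U)²) dx dy = (3(a+2)/2)·∫_{ℝ^{n+1}_+} y^{a+1}·U² dx dy. -/
/-!
The extension `U` solves `div (yᵃ ∇U) = 0`, that is `ΔₓU + ∂²_yU + (a/y) ∂_yU = 0`. Multiplying by
`U` and integrating over the slice of height `y` shows that, for every `b`, the flux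
`F(y) = y^b ∫ U ∂_yU dx - (b - a)/2 · y^(b-1) ∫ U² dx` satisfies
`F'(y) = y^b ∫ |∇U|² dx - (b - a)(b - 1)/2 · y^(b-2) ∫ U² dx`.
Since `F` vanishes at `0` and at `∞`, integrating over `(0, ∞)` gives the identity, with
`b = a + 3`.

Every derivative of the Poisson kernel is the kernel times a quantity homogeneous of negative
degree, hence costs a power of `y⁻¹`. So all the integrability needed follows from one decay
estimate `|U| ≲ (1 + |x|² + y²)^(-β)`.
-/

open MeasureTheory Real Set Filter Topology Module

section HalfLine

variable {r q : ℝ}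

lemma integrableOn_Ioi_rpow_mul_one_add_sq_rpow (hr : -1 < r) (hrq : r + 1 < 2 * q) :
    IntegrableOn (fun y : ℝ ↦ y ^ r * (1 + y ^ 2) ^ (-q)) (Ioi 0) := by
  have hcont : Continuous fun y : ℝ ↦ (1 + y ^ 2) ^ (-q) :=
    (by fun_prop : Continuous fun y : ℝ ↦ 1 + y ^ 2).rpow_const fun y ↦ Or.inl (by positivity)
  have htop : (fun y : ℝ ↦ (1 + y ^ 2) ^ (-q)) =O[atTop] (· ^ (-(2 * q))) := by
    refine .of_bound' ?_
    filter_upwards [eventually_gt_atTop 0] with y hy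
    rw [norm_of_nonneg (by positivity), norm_of_nonneg (by positivity), ← mul_neg,
      rpow_mul hy.le, rpow_two]
    exact rpow_le_rpow_of_nonpos (by positivity) (by linarith) (by linarith)
  have hbot : (fun y : ℝ ↦ (1 + y ^ 2) ^ (-q)) =O[𝓝[>] 0] (· ^ (-(0 : ℝ))) := by
    simpa using (hcont.tendsto 0).isBigO_one ℝ |>.mono nhdsWithin_le_nhds
  simpa using mellin_convergent_of_isBigO_scalar (s := r + 1)
    (hcont.locallyIntegrable.locallyIntegrableOn _) htop hrq hbot (by linarith)

lemma tendsto_rpow_mul_one_add_sq_rpow_atTop (hq : 0 ≤ q) (hrq : r < 2 * q) :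
    Tendsto (fun y : ℝ ↦ y ^ r * (1 + y ^ 2) ^ (-q)) atTop (𝓝 0) := by
  refine squeeze_zero' ?_ ?_ (tendsto_rpow_neg_atTop (sub_pos.2 hrq))
  · filter_upwards [eventually_gt_atTop 0] with y hy
    positivity
  · filter_upwards [eventually_gt_atTop 0] with y hy
    calc y ^ r * (1 + y ^ 2) ^ (-q) ≤ y ^ r * (y ^ 2) ^ (-q) :=
          mul_le_mul_of_nonneg_left
            (rpow_le_rpow_of_nonpos (by positivity) (by linarith) (by linarith)) (by positivity)
      _ = y ^ (-(2 * q - r)) := by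
          rw [← rpow_two, ← rpow_mul hy.le, ← rpow_add hy]
          ring_nf

lemma tendsto_rpow_mul_one_add_sq_rpow_nhdsGT_zero (hr : 0 < r) :
    Tendsto (fun y : ℝ ↦ y ^ r * (1 + y ^ 2) ^ (-q)) (𝓝[>] 0) (𝓝 0) := by
  have hcont : ContinuousAt (fun y : ℝ ↦ y ^ r * (1 + y ^ 2) ^ (-q)) 0 :=
    (continuousAt_rpow_const 0 r (Or.inr hr.le)).mul
      ((by fun_prop : ContinuousAt (fun y : ℝ ↦ 1 + y ^ 2) 0).rpow_const (Or.inl (by norm_num)))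
  simpa [zero_rpow hr.ne'] using hcont.tendsto.mono_left nhdsWithin_le_nhds

lemma integral_Ioi_eq_zero_of_hasDerivAt_of_tendsto_zero {F F' : ℝ → ℝ} {a : ℝ}
    (hderiv : ∀ y ∈ Ioi a, HasDerivAt F (F' y) y) (hint : IntegrableOn F' (Ioi a))
    (hbot : Tendsto F (𝓝[>] a) (𝓝 0)) (htop : Tendsto F atTop (𝓝 0)) :
    ∫ y in Ioi a, F' y = 0 := by
  have heq : ∀ y ∈ Ioi a, Function.update F a 0 =ᶠ[𝓝 y] F := fun y hy ↦
    (eventually_ne_nhds (ne_of_gt hy)).mono fun z hz ↦ Function.update_of_ne hz _ _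
  have htop' : Function.update F a 0 =ᶠ[atTop] F :=
    (eventually_ne_atTop a).mono fun z hz ↦ Function.update_of_ne hz _ _
  have h := integral_Ioi_of_hasDerivAt_of_tendsto
    (continuousWithinAt_update_same.2 (by simpa only [Ici_sdiff_left] using hbot))
    (fun y hy ↦ (hderiv y hy).congr_of_eventuallyEq (heq y hy)) hint (htop.congr' htop'.symm)
  simpa using h

end HalfLine

section ScaledKernel

lemma norm_sq_add_sq_rpow_neg {E : Type*} [NormedAddCommGroup E] [NormedSpace ℝ E] {y : ℝ}
    (hy : 0 < y) (q : ℝ) (z : E) :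
    (‖z‖ ^ 2 + y ^ 2) ^ (-q) = y ^ (-(2 * q)) * (1 + ‖y⁻¹ • z‖ ^ 2) ^ (-q) := by
  have hscale : ‖z‖ ^ 2 + y ^ 2 = y ^ 2 * (1 + ‖y⁻¹ • z‖ ^ 2) := by
    rw [norm_smul, norm_of_nonneg (by positivity)]
    field_simp
    ring
  rw [hscale, mul_rpow (by positivity) (by positivity), ← rpow_two, ← rpow_mul hy.le, mul_neg]

variable {E : Type*} [NormedAddCommGroup E] [InnerProductSpace ℝ E] [FiniteDimensional ℝ E]
  [MeasurableSpace E] [BorelSpace E]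

lemma integrable_one_add_norm_sq_rpow_neg {q : ℝ} (hq : finrank ℝ E < 2 * q) :
    Integrable fun z : E ↦ (1 + ‖z‖ ^ 2) ^ (-q) := by
  simpa [neg_div] using integrable_rpow_neg_one_add_norm_sq (E := E) (μ := volume) hq

lemma integrable_norm_sq_add_sq_rpow_neg {q y : ℝ} (hq : finrank ℝ E < 2 * q) (hy : 0 < y) :
    Integrable fun z : E ↦ (‖z‖ ^ 2 + y ^ 2) ^ (-q) := by
  simp_rw [norm_sq_add_sq_rpow_neg hy]
  exact ((integrable_comp_smul_iff volume _ (inv_ne_zero hy.ne')).2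
    (integrable_one_add_norm_sq_rpow_neg hq)).const_mul _

lemma integral_norm_sq_add_sq_rpow_neg {y : ℝ} (hy : 0 < y) (q : ℝ) :
    ∫ z : E, (‖z‖ ^ 2 + y ^ 2) ^ (-q) =
      y ^ (finrank ℝ E - 2 * q) * ∫ z : E, (1 + ‖z‖ ^ 2) ^ (-q) := by
  simp_rw [norm_sq_add_sq_rpow_neg hy]
  rw [integral_const_mul,
    Measure.integral_comp_smul volume fun z : E ↦ (1 + ‖z‖ ^ 2) ^ (-q), smul_eq_mul, ← mul_assoc]
  congr 1
  rw [abs_of_pos (by positivity), inv_pow, inv_inv, ← rpow_natCast, ← rpow_add hy]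
  ring_nf

end ScaledKernel

/-- `f = O(y⁻ᵏ ρ)` on the open upper half-space of points `(x, y)`, `y > 0`, together with the
measurability that makes such a bound usable under the integral sign. -/
structure DominatedBy {α : Type*} [MeasurableSpace α] (ρ : α × ℝ → ℝ) (k : ℕ) (f : α × ℝ → ℝ) :
    Prop where
  measurable : Measurable f
  exists_bound : ∃ C, 0 ≤ C ∧ ∀ x y, 0 < y → |f (x, y)| ≤ C / y ^ k * ρ (x, y)

namespace DominatedBy

variable {α : Type*} [MeasurableSpace α] {ρ σ f g : α × ℝ → ℝ} {j k : ℕ}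

lemma add (hf : DominatedBy ρ k f) (hg : DominatedBy ρ k g) : DominatedBy ρ k (f + g) := by
  obtain ⟨A, hA, hfA⟩ := hf.exists_bound
  obtain ⟨B, hB, hgB⟩ := hg.exists_bound
  refine ⟨hf.measurable.add hg.measurable, A + B, by positivity, fun x y hy ↦ ?_⟩
  calc |f (x, y) + g (x, y)| ≤ |f (x, y)| + |g (x, y)| := abs_add_le _ _
    _ ≤ A / y ^ k * ρ (x, y) + B / y ^ k * ρ (x, y) := add_le_add (hfA x y hy) (hgB x y hy)
    _ = (A + B) / y ^ k * ρ (x, y) := by ring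

lemma sum {ι : Type*} {s : Finset ι} {f : ι → α × ℝ → ℝ} (hf : ∀ i ∈ s, DominatedBy ρ k (f i)) :
    DominatedBy ρ k (∑ i ∈ s, f i) :=
  Finset.sum_induction f (DominatedBy ρ k) (fun _ _ ↦ add)
    ⟨measurable_zero, 0, le_rfl, fun _ _ _ ↦ by simp⟩ hf

lemma mul (hf : DominatedBy ρ j f) (hg : DominatedBy σ k g) :
    DominatedBy (ρ * σ) (j + k) (f * g) := by
  obtain ⟨A, hA, hfA⟩ := hf.exists_bound
  obtain ⟨B, hB, hgB⟩ := hg.exists_bound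
  refine ⟨hf.measurable.mul hg.measurable, A * B, by positivity, fun x y hy ↦ ?_⟩
  calc |f (x, y) * g (x, y)| = |f (x, y)| * |g (x, y)| := abs_mul _ _
    _ ≤ A / y ^ j * ρ (x, y) * (B / y ^ k * σ (x, y)) :=
        mul_le_mul (hfA x y hy) (hgB x y hy) (abs_nonneg _) ((abs_nonneg _).trans (hfA x y hy))
    _ = A * B / y ^ (j + k) * (ρ (x, y) * σ (x, y)) := by
        rw [pow_add]
        ring

end DominatedBy

section DecayWeight

variable {E : Type*} [NormedAddCommGroup E]

/-- The radial weight `(1 + ‖x‖² + y²)^(-β)` measuring decay at infinity of functions on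
`E × ℝ`; it carries no singularity at `y = 0`. -/
noncomputable def decayWeight (β : ℝ) (X : E × ℝ) : ℝ := (1 + ‖X.1‖ ^ 2 + X.2 ^ 2) ^ (-β)

lemma decayWeight_nonneg (β : ℝ) (X : E × ℝ) : 0 ≤ decayWeight β X := by
  unfold decayWeight
  positivity

lemma decayWeight_mul_self (β : ℝ) :
    decayWeight β * decayWeight β = decayWeight (E := E) (2 * β) := by
  ext X
  simp only [Pi.mul_apply, decayWeight]
  rw [← rpow_add (by positivity)]
  ring_nf

lemma decayWeight_le_decayWeight_zero {β : ℝ} (hβ : 0 ≤ β) (x : E) (y : ℝ) :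
    decayWeight β (x, y) ≤ decayWeight β (x, 0) :=
  rpow_le_rpow_of_nonpos (by positivity) (by simp [sq_nonneg]) (by linarith)

lemma decayWeight_eq_norm_sq_add_sq_rpow (β : ℝ) (x : E) (y : ℝ) :
    decayWeight β (x, y) = (‖x‖ ^ 2 + √(1 + y ^ 2) ^ 2) ^ (-β) := by
  rw [decayWeight, sq_sqrt (by positivity)]
  ring_nf

lemma DominatedBy.mul_decayWeight [MeasurableSpace E] {β : ℝ} {j k : ℕ} {f g : E × ℝ → ℝ}
    (hf : DominatedBy (decayWeight β) j f) (hg : DominatedBy (decayWeight β) k g) :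
    DominatedBy (decayWeight (2 * β)) (j + k) (f * g) :=
  decayWeight_mul_self (E := E) β ▸ hf.mul hg

variable [InnerProductSpace ℝ E] [FiniteDimensional ℝ E] [MeasurableSpace E] [BorelSpace E]
  {β : ℝ}

lemma integrable_decayWeight (hβ : finrank ℝ E < 2 * β) (y : ℝ) :
    Integrable fun x : E ↦ decayWeight β (x, y) := by
  simp_rw [decayWeight_eq_norm_sq_add_sq_rpow]
  exact integrable_norm_sq_add_sq_rpow_neg hβ (by positivity)

lemma integral_decayWeight (β y : ℝ) :
    ∫ x : E, decayWeight β (x, y) =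
      (1 + y ^ 2) ^ (-(β - finrank ℝ E / 2)) * ∫ z : E, (1 + ‖z‖ ^ 2) ^ (-β) := by
  simp_rw [decayWeight_eq_norm_sq_add_sq_rpow]
  rw [integral_norm_sq_add_sq_rpow_neg (by positivity), sqrt_eq_rpow, ← rpow_mul (by positivity)]
  ring_nf

end DecayWeight

section SliceIntegrals

variable {E : Type*} [NormedAddCommGroup E] [InnerProductSpace ℝ E] [FiniteDimensional ℝ E]
  [MeasurableSpace E] [BorelSpace E] {β c y : ℝ} {j k : ℕ} {f f' g g' : E × ℝ → ℝ}

namespace DominatedBy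

lemma integrable_slice (hf : DominatedBy (decayWeight β) k f) (hβ : finrank ℝ E < 2 * β)
    (hy : 0 < y) : Integrable fun x ↦ f (x, y) := by
  obtain ⟨C, -, hC⟩ := hf.exists_bound
  exact ((integrable_decayWeight hβ y).const_mul (C / y ^ k)).mono'
    (hf.measurable.comp (by fun_prop)).aestronglyMeasurable (ae_of_all _ fun x ↦ hC x y hy)

lemma exists_abs_integral_le (hf : DominatedBy (decayWeight β) k f) (hβ : finrank ℝ E < 2 * β) :
    ∃ C, 0 ≤ C ∧ ∀ y, 0 < y →
      |∫ x, f (x, y)| ≤ C * (y ^ (-(k : ℝ)) * (1 + y ^ 2) ^ (-(β - finrank ℝ E / 2))) := by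
  obtain ⟨C, hC₀, hC⟩ := hf.exists_bound
  refine ⟨C * ∫ z : E, (1 + ‖z‖ ^ 2) ^ (-β), by positivity, fun y hy ↦ ?_⟩
  calc |∫ x, f (x, y)| ≤ ∫ x, |f (x, y)| := abs_integral_le_integral_abs
    _ ≤ ∫ x, C / y ^ k * decayWeight β (x, y) :=
        integral_mono (hf.integrable_slice hβ hy).abs ((integrable_decayWeight hβ y).const_mul _)
          fun x ↦ hC x y hy
    _ = _ := by
        rw [integral_const_mul, integral_decayWeight, rpow_neg hy.le, rpow_natCast]
        ring

lemma exists_abs_rpow_mul_integral_le (hf : DominatedBy (decayWeight β) k f)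
    (hβ : finrank ℝ E < 2 * β) (c : ℝ) :
    ∃ C, 0 ≤ C ∧ ∀ y, 0 < y →
      |y ^ c * ∫ x, f (x, y)| ≤ C * (y ^ (c - k) * (1 + y ^ 2) ^ (-(β - finrank ℝ E / 2))) := by
  obtain ⟨C, hC₀, hC⟩ := hf.exists_abs_integral_le hβ
  refine ⟨C, hC₀, fun y hy ↦ ?_⟩
  rw [abs_mul, abs_of_pos (by positivity), sub_eq_add_neg, rpow_add hy]
  linarith [mul_le_mul_of_nonneg_left (hC y hy) (rpow_nonneg hy.le c)]

lemma integrableOn_rpow_mul_integral (hf : DominatedBy (decayWeight β) k f)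
    (hβ : finrank ℝ E < 2 * β) (hck : -1 < c - k) (hcβ : finrank ℝ E + c - k + 1 < 2 * β) :
    IntegrableOn (fun y ↦ y ^ c * ∫ x, f (x, y)) (Ioi 0) := by
  obtain ⟨C, -, hC⟩ := hf.exists_abs_rpow_mul_integral_le hβ c
  refine ((integrableOn_Ioi_rpow_mul_one_add_sq_rpow hck (q := β - finrank ℝ E / 2)
    (by linarith)).const_mul C).mono' (.mul (by fun_prop) ?_)
    ((ae_restrict_iff' measurableSet_Ioi).2 (ae_of_all _ hC))
  exact hf.measurable.stronglyMeasurable.integral_prod_left'.aestronglyMeasurable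

lemma tendsto_rpow_mul_integral_atTop (hf : DominatedBy (decayWeight β) k f)
    (hβ : finrank ℝ E < 2 * β) (hcβ : finrank ℝ E + c - k < 2 * β) :
    Tendsto (fun y ↦ y ^ c * ∫ x, f (x, y)) atTop (𝓝 0) := by
  obtain ⟨C, -, hC⟩ := hf.exists_abs_rpow_mul_integral_le hβ c
  refine squeeze_zero_norm' ((eventually_gt_atTop 0).mono hC) ?_
  simpa using (tendsto_rpow_mul_one_add_sq_rpow_atTop (r := c - k) (q := β - finrank ℝ E / 2)
    (by linarith) (by linarith)).const_mul C

lemma tendsto_rpow_mul_integral_nhdsGT_zero (hf : DominatedBy (decayWeight β) k f)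
    (hβ : finrank ℝ E < 2 * β) (hck : k < c) :
    Tendsto (fun y ↦ y ^ c * ∫ x, f (x, y)) (𝓝[>] 0) (𝓝 0) := by
  obtain ⟨C, -, hC⟩ := hf.exists_abs_rpow_mul_integral_le hβ c
  refine squeeze_zero_norm' (eventually_mem_nhdsWithin.mono hC) ?_
  simpa using (tendsto_rpow_mul_one_add_sq_rpow_nhdsGT_zero (q := β - finrank ℝ E / 2)
    (sub_pos.2 hck)).const_mul C

lemma hasDerivAt_integral (hf : DominatedBy (decayWeight β) j f)
    (hf' : DominatedBy (decayWeight β) k f') (hβ : finrank ℝ E < 2 * β)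
    (hderiv : ∀ x y, 0 < y → HasDerivAt (fun z ↦ f (x, z)) (f' (x, y)) y) (hy : 0 < y) :
    HasDerivAt (fun z ↦ ∫ x, f (x, z)) (∫ x, f' (x, y)) y := by
  obtain ⟨C, hC₀, hC⟩ := hf'.exists_bound
  have hβ₀ : 0 ≤ β := by linarith [(finrank ℝ E).cast_nonneg (α := ℝ)]
  have hbound (x : E) (z : ℝ) (hz : y / 2 < z) :
      ‖f' (x, z)‖ ≤ C / (y / 2) ^ k * decayWeight β (x, 0) :=
    (hC x z (by linarith)).trans <| by
      gcongr
      exacts [decayWeight_nonneg _ _, decayWeight_le_decayWeight_zero hβ₀ x z]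
  refine (hasDerivAt_integral_of_dominated_loc_of_deriv_le (Ioi_mem_nhds (half_lt_self hy))
    (.of_forall fun z ↦ (hf.measurable.comp (by fun_prop)).aestronglyMeasurable)
    (hf.integrable_slice hβ hy) (hf'.measurable.comp (by fun_prop)).aestronglyMeasurable
    (ae_of_all _ hbound) ((integrable_decayWeight hβ 0).const_mul _)
    (ae_of_all _ fun x z hz ↦ hderiv x z ?_)).2
  exact (half_pos hy).trans hz

lemma integral_mul_hasLineDerivAt_eq_neg {v : E} {j' k' : ℕ}
    (hf : DominatedBy (decayWeight β) j f) (hf' : DominatedBy (decayWeight β) j' f')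
    (hg : DominatedBy (decayWeight β) k g) (hg' : DominatedBy (decayWeight β) k' g')
    (hβ : finrank ℝ E < 4 * β) (hy : 0 < y)
    (hfderiv : ∀ x, HasLineDerivAt ℝ f (f' (x, y)) (x, y) (v, 0))
    (hgderiv : ∀ x, HasLineDerivAt ℝ g (g' (x, y)) (x, y) (v, 0)) :
    ∫ x, f (x, y) * g' (x, y) = -∫ x, f' (x, y) * g (x, y) := by
  have hslice {h : E × ℝ → ℝ} {D : ℝ} {x : E} (hh : HasLineDerivAt ℝ h D (x, y) (v, 0)) :
      HasLineDerivAt ℝ (fun x ↦ h (x, y)) D x v := by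
    simpa [HasLineDerivAt] using hh
  have hβ' : finrank ℝ E < 2 * (2 * β) := by linarith
  simpa using integral_bilinear_hasLineDerivAt_right_eq_neg_left_of_integrable (μ := volume)
    (B := ContinuousLinearMap.mul ℝ ℝ) ((hf'.mul_decayWeight hg).integrable_slice hβ' hy)
    ((hf.mul_decayWeight hg').integrable_slice hβ' hy)
    ((hf.mul_decayWeight hg).integrable_slice hβ' hy)
    (fun x _ ↦ hslice (hfderiv x)) (fun x _ ↦ hslice (hgderiv x))

end DominatedBy

end SliceIntegrals

section EnergyIdentity

lemma hasDerivAt_comp_add_smul {F : Type*} [AddCommGroup F] [Module ℝ F] {f : F → ℝ} {x v : F}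
    {t D : ℝ} (h : HasLineDerivAt ℝ f D (x + t • v) v) :
    HasDerivAt (fun r ↦ f (x + r • v)) D t := by
  have h' : HasDerivAt (fun r ↦ f (x + t • v + r • v)) D (t - t) := by rwa [sub_self]
  simpa [add_assoc, ← add_smul] using h'.comp_sub_const t t

lemma hasDerivAt_snd_of_hasLineDerivAt {E : Type*} [AddCommGroup E] [Module ℝ E] {f : E × ℝ → ℝ}
    {D : ℝ} {x : E} {y : ℝ} (h : HasLineDerivAt ℝ f D (x, y) (0, 1)) :
    HasDerivAt (fun z ↦ f (x, z)) D y := by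
  simpa using hasDerivAt_comp_add_smul (f := f) (x := (x, 0)) (v := (0, 1)) (t := y)
    (by simpa using h)

/-- `U` solves `div (yᵃ ∇U) = 0` in the upper half-space, written as `ΔₓU + ∂²_yU + (a/y) ∂_yU = 0`
with `Δₓ` the sum of second derivatives along the family `e`. The first and second derivatives of
`U` in the direction `v` are `D v` and `D₂ v`, and every derivative costs one power of `y⁻¹`
without affecting the decay `O((1 + ‖x‖² + y²)^(-β))` at infinity. -/
structure IsDecayingSolution {E ι : Type*} [NormedAddCommGroup E] [NormedSpace ℝ E]
    [MeasurableSpace E] [Fintype ι] (a β : ℝ) (e : ι → E) (U : E × ℝ → ℝ)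
    (D D₂ : E × ℝ → E × ℝ → ℝ) : Prop where
  dominatedBy : DominatedBy (decayWeight β) 0 U
  dominatedBy_deriv : ∀ v, DominatedBy (decayWeight β) 1 (D v)
  dominatedBy_deriv₂ : ∀ v, DominatedBy (decayWeight β) 2 (D₂ v)
  hasLineDerivAt : ∀ v X, 0 < X.2 → HasLineDerivAt ℝ U (D v X) X v
  hasLineDerivAt_deriv : ∀ v X, 0 < X.2 → HasLineDerivAt ℝ (D v) (D₂ v X) X v
  sum_deriv₂_eq_zero : ∀ X, 0 < X.2 →
    (∑ i, D₂ (e i, 0) X) + D₂ (0, 1) X + a / X.2 * D (0, 1) X = 0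

/-- The squared gradient `|∇ₓU|² + (∂_yU)²`, where `D v` is the derivative of `U` in the direction
`v` and `∇ₓ` is taken along the family `e`. -/
def gradNormSq {E ι : Type*} [Zero E] [Fintype ι] (e : ι → E)
    (D : E × ℝ → E × ℝ → ℝ) (X : E × ℝ) : ℝ :=
  (∑ i, D (e i, 0) X ^ 2) + D (0, 1) X ^ 2

namespace IsDecayingSolution

variable {E ι : Type*} [NormedAddCommGroup E] [InnerProductSpace ℝ E]
  [MeasurableSpace E] [Fintype ι] {a b β y : ℝ} {e : ι → E} {U : E × ℝ → ℝ}
  {D D₂ : E × ℝ → E × ℝ → ℝ}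

lemma hasDerivAt_snd (h : IsDecayingSolution a β e U D D₂) (hy : 0 < y) (x : E) :
    HasDerivAt (fun z ↦ U (x, z)) (D (0, 1) (x, y)) y :=
  hasDerivAt_snd_of_hasLineDerivAt (h.hasLineDerivAt _ _ hy)

lemma hasDerivAt_deriv_snd (h : IsDecayingSolution a β e U D D₂) (hy : 0 < y) (x : E) :
    HasDerivAt (fun z ↦ D (0, 1) (x, z)) (D₂ (0, 1) (x, y)) y :=
  hasDerivAt_snd_of_hasLineDerivAt (h.hasLineDerivAt_deriv _ _ hy)

lemma dominatedBy_gradNormSq (h : IsDecayingSolution a β e U D D₂) :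
    DominatedBy (decayWeight (2 * β)) 2 (gradNormSq e D) := by
  have hsq (v) : DominatedBy (decayWeight (2 * β)) 2 (D v * D v) :=
    (h.dominatedBy_deriv v).mul_decayWeight (h.dominatedBy_deriv v)
  convert (DominatedBy.sum fun i (_ : i ∈ Finset.univ) ↦ hsq (e i, 0)).add (hsq (0, 1)) using 1
  ext X
  simp [gradNormSq, sq]

variable [FiniteDimensional ℝ E] [BorelSpace E]

lemma integral_mul_deriv₂_fst (h : IsDecayingSolution a β e U D D₂)
    (hβ : finrank ℝ E < 4 * β) (hy : 0 < y) (v : E) :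
    ∫ x, U (x, y) * D₂ (v, 0) (x, y) = -∫ x, D (v, 0) (x, y) ^ 2 := by
  simp_rw [sq]
  exact h.dominatedBy.integral_mul_hasLineDerivAt_eq_neg (h.dominatedBy_deriv _)
    (h.dominatedBy_deriv _) (h.dominatedBy_deriv₂ _) hβ hy (fun x ↦ h.hasLineDerivAt _ _ hy)
    (fun x ↦ h.hasLineDerivAt_deriv _ _ hy)

lemma integral_mul_deriv₂_snd (h : IsDecayingSolution a β e U D D₂)
    (hβ : finrank ℝ E < 4 * β) (hy : 0 < y) :
    ∫ x, U (x, y) * D₂ (0, 1) (x, y) =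
      (∑ i, ∫ x, D (e i, 0) (x, y) ^ 2) - a / y * ∫ x, U (x, y) * D (0, 1) (x, y) := by
  have hβ' : finrank ℝ E < 2 * (2 * β) := by linarith
  have hpde (x : E) : U (x, y) * D₂ (0, 1) (x, y) =
      -((∑ i, U (x, y) * D₂ (e i, 0) (x, y)) + a / y * (U (x, y) * D (0, 1) (x, y))) := by
    rw [← Finset.mul_sum]
    linear_combination U (x, y) * h.sum_deriv₂_eq_zero (x, y) hy
  have hint₂ (v) : Integrable fun x ↦ U (x, y) * D₂ v (x, y) :=
    (h.dominatedBy.mul_decayWeight (h.dominatedBy_deriv₂ v)).integrable_slice hβ' hy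
  have hint₁ : Integrable fun x ↦ U (x, y) * D (0, 1) (x, y) :=
    (h.dominatedBy.mul_decayWeight (h.dominatedBy_deriv _)).integrable_slice hβ' hy
  simp_rw [hpde]
  rw [integral_neg, integral_add (integrable_finsetSum _ fun i _ ↦ hint₂ _) (hint₁.const_mul _),
    integral_finsetSum _ fun i _ ↦ hint₂ _, integral_const_mul]
  simp_rw [h.integral_mul_deriv₂_fst hβ hy, Finset.sum_neg_distrib]
  ring

lemma integral_gradNormSq (h : IsDecayingSolution a β e U D D₂)
    (hβ : finrank ℝ E < 4 * β) (hy : 0 < y) :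
    ∫ x, gradNormSq e D (x, y) =
      (∑ i, ∫ x, D (e i, 0) (x, y) ^ 2) + ∫ x, D (0, 1) (x, y) ^ 2 := by
  have hβ' : finrank ℝ E < 2 * (2 * β) := by linarith
  have hint (v) : Integrable fun x ↦ D v (x, y) ^ 2 := by
    simpa [sq] using ((h.dominatedBy_deriv v).mul_decayWeight
      (h.dominatedBy_deriv v)).integrable_slice hβ' hy
  simp_rw [gradNormSq]
  rw [integral_add (integrable_finsetSum _ fun i _ ↦ hint _) (hint _),
    integral_finsetSum _ fun i _ ↦ hint _]

lemma hasDerivAt_integral_sq (h : IsDecayingSolution a β e U D D₂)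
    (hβ : finrank ℝ E < 4 * β) (hy : 0 < y) :
    HasDerivAt (fun z ↦ ∫ x, U (x, z) ^ 2) (2 * ∫ x, U (x, y) * D (0, 1) (x, y)) y := by
  have hderiv := (h.dominatedBy.mul_decayWeight h.dominatedBy).hasDerivAt_integral
    (((h.dominatedBy_deriv (0, 1)).mul_decayWeight h.dominatedBy).add
      (h.dominatedBy.mul_decayWeight (h.dominatedBy_deriv (0, 1)))) (by linarith)
    (fun x y hy ↦ (h.hasDerivAt_snd hy x).mul (h.hasDerivAt_snd hy x)) hy
  convert hderiv using 1
  · simp [sq]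
  · rw [← integral_const_mul]
    congr with x
    simp only [Pi.add_apply, Pi.mul_apply]
    ring

lemma hasDerivAt_integral_mul_deriv (h : IsDecayingSolution a β e U D D₂)
    (hβ : finrank ℝ E < 4 * β) (hy : 0 < y) :
    HasDerivAt (fun z ↦ ∫ x, U (x, z) * D (0, 1) (x, z))
      ((∫ x, gradNormSq e D (x, y)) - a / y * ∫ x, U (x, y) * D (0, 1) (x, y)) y := by
  have hβ' : finrank ℝ E < 2 * (2 * β) := by linarith
  have hsq := (h.dominatedBy_deriv (0, 1)).mul_decayWeight (h.dominatedBy_deriv (0, 1))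
  have hmul := h.dominatedBy.mul_decayWeight (h.dominatedBy_deriv₂ (0, 1))
  have hderiv := (h.dominatedBy.mul_decayWeight (h.dominatedBy_deriv (0, 1))).hasDerivAt_integral
    (hsq.add hmul) hβ' (fun x y hy ↦ (h.hasDerivAt_snd hy x).mul (h.hasDerivAt_deriv_snd hy x)) hy
  have hsplit : ∫ x, (D (0, 1) * D (0, 1) + U * D₂ (0, 1)) (x, y) =
      (∫ x, D (0, 1) (x, y) ^ 2) + ∫ x, U (x, y) * D₂ (0, 1) (x, y) := by
    simp_rw [sq]
    exact integral_add (hsq.integrable_slice hβ' hy) (hmul.integrable_slice hβ' hy)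
  refine hderiv.congr_deriv ?_
  rw [hsplit, h.integral_mul_deriv₂_snd hβ hy, h.integral_gradNormSq hβ hy]
  ring

lemma hasDerivAt_energyFlux (h : IsDecayingSolution a β e U D D₂)
    (hβ : finrank ℝ E < 4 * β) (b : ℝ) (hy : 0 < y) :
    HasDerivAt (fun z ↦ z ^ b * (∫ x, U (x, z) * D (0, 1) (x, z)) -
        (b - a) / 2 * (z ^ (b - 1) * ∫ x, U (x, z) ^ 2))
      (y ^ b * (∫ x, gradNormSq e D (x, y)) -
        (b - a) * (b - 1) / 2 * (y ^ (b - 2) * ∫ x, U (x, y) ^ 2)) y := by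
  have hrpow (c : ℝ) := hasDerivAt_rpow_const (p := c) (Or.inl hy.ne')
  have hmul := (hrpow b).mul (h.hasDerivAt_integral_mul_deriv hβ hy)
  have hsq := ((hrpow (b - 1)).mul (h.hasDerivAt_integral_sq hβ hy)).const_mul ((b - a) / 2)
  refine (hmul.sub hsq).congr_deriv ?_
  rw [show b - 1 - 1 = b - 2 by ring, rpow_sub_one hy.ne']
  ring

theorem integral_rpow_mul_gradNormSq (h : IsDecayingSolution a β e U D D₂) (hb : 1 < b)
    (hbβ : finrank ℝ E + b - 1 < 4 * β) :
    ∫ y in Ioi 0, y ^ b * ∫ x, gradNormSq e D (x, y) =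
      (b - a) * (b - 1) / 2 * ∫ y in Ioi 0, y ^ (b - 2) * ∫ x, U (x, y) ^ 2 := by
  have hβ : finrank ℝ E < 4 * β := by linarith
  have hβ' : finrank ℝ E < 2 * (2 * β) := by linarith
  have hmul := h.dominatedBy.mul_decayWeight (h.dominatedBy_deriv (0, 1))
  have hsq : DominatedBy (decayWeight (2 * β)) 0 (U ^ 2) :=
    sq U ▸ h.dominatedBy.mul_decayWeight h.dominatedBy
  have hint_grad := h.dominatedBy_gradNormSq.integrableOn_rpow_mul_integral (c := b) hβ'
    (by push_cast; linarith) (by push_cast; linarith)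
  have hint_sq := (hsq.integrableOn_rpow_mul_integral (c := b - 2) hβ' (by push_cast; linarith)
    (by push_cast; linarith)).const_mul ((b - a) * (b - 1) / 2)
  have hbot := (hmul.tendsto_rpow_mul_integral_nhdsGT_zero (c := b) hβ' (by simpa)).sub
    ((hsq.tendsto_rpow_mul_integral_nhdsGT_zero (c := b - 1) hβ' (by simpa)).const_mul
      ((b - a) / 2))
  have htop := (hmul.tendsto_rpow_mul_integral_atTop (c := b) hβ' (by push_cast; linarith)).sub
    ((hsq.tendsto_rpow_mul_integral_atTop (c := b - 1) hβ' (by push_cast; linarith)).const_mul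
      ((b - a) / 2))
  rw [mul_zero, sub_zero] at hbot htop
  have hzero := integral_Ioi_eq_zero_of_hasDerivAt_of_tendsto_zero
    (fun y hy ↦ h.hasDerivAt_energyFlux hβ b hy) (hint_grad.sub hint_sq) hbot htop
  rw [← integral_const_mul, ← sub_eq_zero]
  exact (integral_sub hint_grad hint_sq).symm.trans hzero

end IsDecayingSolution

end EnergyIdentity

lemma half_snd_le_of_dist_le {α : Type*} [PseudoMetricSpace α] {Z Z' : α × ℝ}
    (hdist : dist Z' Z ≤ Z.2 / 2) : Z.2 / 2 ≤ Z'.2 := by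
  have hsnd := (le_max_right _ _).trans (Prod.dist_eq (x := Z') (y := Z) ▸ hdist)
  linarith [(abs_le.1 hsnd).1]

lemma dist_add_smul_le_half_snd {E : Type*} [NormedAddCommGroup E] [NormedSpace ℝ E]
    {Z v : E × ℝ} {t : ℝ} (ht : t ∈ Metric.ball 0 (Z.2 / 2 / (1 + ‖v‖))) :
    dist (Z + t • v) Z ≤ Z.2 / 2 := by
  rw [mem_ball_zero_iff, lt_div_iff₀ (by positivity)] at ht
  rw [dist_self_add_left, norm_smul]
  linarith [norm_nonneg t]

lemma hasLineDerivAt_snd {E : Type*} [AddCommGroup E] [Module ℝ E] (Z v : E × ℝ) :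
    HasLineDerivAt ℝ (fun Z : E × ℝ ↦ Z.2) v.2 Z v := by
  simpa [HasLineDerivAt] using ((hasDerivAt_id (0 : ℝ)).mul_const v.2).const_add Z.2

lemma hasLineDerivAt_fst {E : Type*} [NormedAddCommGroup E] [NormedSpace ℝ E] (Z v : E × ℝ) :
    HasLineDerivAt ℝ (fun Z : E × ℝ ↦ Z.1) v.1 Z v := by
  simpa [HasLineDerivAt] using ((hasDerivAt_id (0 : ℝ)).smul_const v.1).const_add Z.1

section PoissonKernel

open scoped InnerProductSpace

variable {E : Type*} [NormedAddCommGroup E] [InnerProductSpace ℝ E] {γ : ℝ}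

/-- The Euclidean inner product on `E × ℝ`, which carries the sup norm as a product. -/
noncomputable def euclideanInner (Z v : E × ℝ) : ℝ := ⟪Z.1, v.1⟫_ℝ + Z.2 * v.2

lemma abs_euclideanInner_div_le (Z v : E × ℝ) (hZ : 0 < Z.2) :
    |euclideanInner Z v / (‖Z.1‖ ^ 2 + Z.2 ^ 2)| ≤ √(‖v.1‖ ^ 2 + v.2 ^ 2) / Z.2 := by
  have hcs : |euclideanInner Z v| ≤ √(‖v.1‖ ^ 2 + v.2 ^ 2) * √(‖Z.1‖ ^ 2 + Z.2 ^ 2) := by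
    rw [← sqrt_mul (by positivity)]
    refine abs_le_sqrt ?_
    have hinner : |⟪Z.1, v.1⟫_ℝ| ≤ ‖Z.1‖ * ‖v.1‖ := abs_real_inner_le_norm _ _
    calc (⟪Z.1, v.1⟫_ℝ + Z.2 * v.2) ^ 2 ≤ (‖Z.1‖ * ‖v.1‖ + |Z.2| * |v.2|) ^ 2 := by
          rw [← sq_abs, ← abs_mul]
          gcongr
          exact (abs_add_le _ _).trans (by gcongr)
      _ ≤ (‖v.1‖ ^ 2 + v.2 ^ 2) * (‖Z.1‖ ^ 2 + Z.2 ^ 2) := by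
          rw [← sq_abs v.2, ← sq_abs Z.2]
          nlinarith [sq_nonneg (‖Z.1‖ * |v.2| - |Z.2| * ‖v.1‖)]
  have hsqrt : Z.2 ≤ √(‖Z.1‖ ^ 2 + Z.2 ^ 2) := le_sqrt_of_sq_le (by linarith [sq_nonneg ‖Z.1‖])
  have hQ : √(‖Z.1‖ ^ 2 + Z.2 ^ 2) ^ 2 = ‖Z.1‖ ^ 2 + Z.2 ^ 2 := sq_sqrt (by positivity)
  rw [abs_div, abs_of_pos (a := _ + _) (by positivity), div_le_div_iff₀ (by positivity) hZ, ← hQ]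
  calc |euclideanInner Z v| * Z.2
      ≤ √(‖v.1‖ ^ 2 + v.2 ^ 2) * √(‖Z.1‖ ^ 2 + Z.2 ^ 2) * √(‖Z.1‖ ^ 2 + Z.2 ^ 2) := by gcongr
    _ = √(‖v.1‖ ^ 2 + v.2 ^ 2) * √(‖Z.1‖ ^ 2 + Z.2 ^ 2) ^ 2 := by ring

/-- The unnormalized Poisson kernel `y^(2γ) (‖z‖² + y²)^(-(d + 2γ)/2)`, `d = dim E`, of the
Caffarelli–Silvestre extension. -/
noncomputable def fracPoissonKernel (γ : ℝ) (Z : E × ℝ) : ℝ :=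
  Z.2 ^ (2 * γ) * (‖Z.1‖ ^ 2 + Z.2 ^ 2) ^ (-((finrank ℝ E + 2 * γ) / 2))

/-- The derivative of `log (fracPoissonKernel γ)` at `Z` in the direction `v`. -/
noncomputable def fracPoissonLogDeriv (γ : ℝ) (v Z : E × ℝ) : ℝ :=
  2 * γ * (v.2 / Z.2) -
    (finrank ℝ E + 2 * γ) * (euclideanInner Z v / (‖Z.1‖ ^ 2 + Z.2 ^ 2))

/-- The second derivative of `log (fracPoissonKernel γ)` at `Z` in the direction `v`. -/
noncomputable def fracPoissonLogDeriv₂ (γ : ℝ) (v Z : E × ℝ) : ℝ :=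
  -(2 * γ) * (v.2 / Z.2) ^ 2 + (finrank ℝ E + 2 * γ) *
    (2 * (euclideanInner Z v / (‖Z.1‖ ^ 2 + Z.2 ^ 2)) ^ 2 -
      (‖v.1‖ ^ 2 + v.2 ^ 2) / (‖Z.1‖ ^ 2 + Z.2 ^ 2))

/-- The derivative of `fracPoissonKernel γ` at `Z` in the direction `v`. -/
noncomputable def fracPoissonKernelDeriv (γ : ℝ) (v Z : E × ℝ) : ℝ :=
  fracPoissonKernel γ Z * fracPoissonLogDeriv γ v Z

/-- The second derivative of `fracPoissonKernel γ` at `Z` in the direction `v`. -/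
noncomputable def fracPoissonKernelDeriv₂ (γ : ℝ) (v Z : E × ℝ) : ℝ :=
  fracPoissonKernel γ Z * (fracPoissonLogDeriv γ v Z ^ 2 + fracPoissonLogDeriv₂ γ v Z)

lemma fracPoissonKernel_nonneg (γ : ℝ) {Z : E × ℝ} (hZ : 0 < Z.2) : 0 ≤ fracPoissonKernel γ Z := by
  unfold fracPoissonKernel
  positivity

lemma hasLineDerivAt_norm_sq_add_sq (Z v : E × ℝ) :
    HasLineDerivAt ℝ (fun Z : E × ℝ ↦ ‖Z.1‖ ^ 2 + Z.2 ^ 2) (2 * euclideanInner Z v) Z v := by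
  have hfst : HasDerivAt (fun t : ℝ ↦ (Z + t • v).1) v.1 0 := hasLineDerivAt_fst Z v
  have hsnd : HasDerivAt (fun t : ℝ ↦ (Z + t • v).2) v.2 0 := hasLineDerivAt_snd Z v
  refine (hfst.norm_sq.add (hsnd.pow 2)).congr_deriv ?_
  simp only [euclideanInner, zero_smul, add_zero, Nat.cast_ofNat, Nat.add_one_sub_one, pow_one]
  ring

lemma hasLineDerivAt_euclideanInner (Z v : E × ℝ) :
    HasLineDerivAt ℝ (fun Z ↦ euclideanInner Z v) (‖v.1‖ ^ 2 + v.2 ^ 2) Z v := by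
  have hfst : HasDerivAt (fun t : ℝ ↦ (Z + t • v).1) v.1 0 := hasLineDerivAt_fst Z v
  have hsnd : HasDerivAt (fun t : ℝ ↦ (Z + t • v).2) v.2 0 := hasLineDerivAt_snd Z v
  refine ((hfst.inner ℝ (hasDerivAt_const 0 v.1)).add (hsnd.mul_const v.2)).congr_deriv ?_
  simp [sq]

lemma hasLineDerivAt_fracPoissonKernel (γ : ℝ) (v : E × ℝ) {Z : E × ℝ} (hZ : 0 < Z.2) :
    HasLineDerivAt ℝ (fracPoissonKernel γ) (fracPoissonKernelDeriv γ v Z) Z v := by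
  have hsnd : HasDerivAt (fun t : ℝ ↦ (Z + t • v).2) v.2 0 := hasLineDerivAt_snd Z v
  have hQ : HasDerivAt (fun t : ℝ ↦ ‖(Z + t • v).1‖ ^ 2 + (Z + t • v).2 ^ 2)
      (2 * euclideanInner Z v) 0 := hasLineDerivAt_norm_sq_add_sq Z v
  have hQ₀ : ‖Z.1‖ ^ 2 + Z.2 ^ 2 ≠ 0 := by positivity
  refine ((hsnd.rpow_const (p := 2 * γ) (Or.inl (by simpa using hZ.ne'))).mul
    (hQ.rpow_const (p := -((finrank ℝ E + 2 * γ) / 2))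
      (Or.inl (by simpa only [zero_smul, add_zero] using hQ₀)))).congr_deriv ?_
  simp only [zero_smul, add_zero, fracPoissonKernelDeriv, fracPoissonLogDeriv, fracPoissonKernel]
  rw [rpow_sub_one hZ.ne', rpow_sub_one hQ₀]
  ring

lemma hasLineDerivAt_fracPoissonLogDeriv (γ : ℝ) (v : E × ℝ) {Z : E × ℝ} (hZ : 0 < Z.2) :
    HasLineDerivAt ℝ (fracPoissonLogDeriv γ v) (fracPoissonLogDeriv₂ γ v Z) Z v := by
  have hsnd : HasDerivAt (fun t : ℝ ↦ (Z + t • v).2) v.2 0 := hasLineDerivAt_snd Z v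
  have hQ : HasDerivAt (fun t : ℝ ↦ ‖(Z + t • v).1‖ ^ 2 + (Z + t • v).2 ^ 2)
      (2 * euclideanInner Z v) 0 := hasLineDerivAt_norm_sq_add_sq Z v
  have hQ₀ : ‖Z.1‖ ^ 2 + Z.2 ^ 2 ≠ 0 := by positivity
  have hB : HasDerivAt (fun t : ℝ ↦ euclideanInner (Z + t • v) v) (‖v.1‖ ^ 2 + v.2 ^ 2) 0 :=
    hasLineDerivAt_euclideanInner Z v
  have hη := (hasDerivAt_const 0 v.2).div hsnd (by simpa using hZ.ne')
  have hBQ := hB.div hQ (by simpa only [zero_smul, add_zero] using hQ₀)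
  refine ((hη.const_mul (2 * γ)).sub (hBQ.const_mul (finrank ℝ E + 2 * γ))).congr_deriv ?_
  simp only [zero_smul, add_zero, fracPoissonLogDeriv₂]
  field_simp
  ring

lemma hasLineDerivAt_fracPoissonKernelDeriv (γ : ℝ) (v : E × ℝ) {Z : E × ℝ} (hZ : 0 < Z.2) :
    HasLineDerivAt ℝ (fracPoissonKernelDeriv γ v) (fracPoissonKernelDeriv₂ γ v Z) Z v := by
  refine ((hasLineDerivAt_fracPoissonKernel γ v hZ).mul
    (hasLineDerivAt_fracPoissonLogDeriv γ v hZ)).congr_deriv ?_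
  simp only [zero_smul, add_zero, fracPoissonKernelDeriv, fracPoissonKernelDeriv₂]
  ring

lemma sum_fracPoissonKernelDeriv₂ {ι : Type*} [Fintype ι] (e : OrthonormalBasis ι ℝ E) (γ : ℝ)
    {Z : E × ℝ} (hZ : 0 < Z.2) :
    (∑ i, fracPoissonKernelDeriv₂ γ (e i, 0) Z) + fracPoissonKernelDeriv₂ γ (0, 1) Z +
      (1 - 2 * γ) / Z.2 * fracPoissonKernelDeriv γ (0, 1) Z = 0 := by
  have hcard : (Fintype.card ι : ℝ) = finrank ℝ E := by
    rw [finrank_eq_card_basis e.toBasis]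
  have hfst (i) : fracPoissonKernelDeriv₂ γ (e i, 0) Z =
      fracPoissonKernel γ Z * (finrank ℝ E + 2 * γ) *
      ((finrank ℝ E + 2 * γ + 2) / (‖Z.1‖ ^ 2 + Z.2 ^ 2) ^ 2 * ⟪Z.1, e i⟫_ℝ ^ 2 -
        1 / (‖Z.1‖ ^ 2 + Z.2 ^ 2)) := by
    simp only [fracPoissonKernelDeriv₂, fracPoissonLogDeriv, fracPoissonLogDeriv₂, euclideanInner,
      e.norm_eq_one]
    field_simp
    ring
  simp_rw [hfst]
  rw [← Finset.mul_sum, Finset.sum_sub_distrib, ← Finset.mul_sum, e.sum_sq_inner_left,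
    Finset.sum_const, Finset.card_univ, nsmul_eq_mul, hcard]
  simp only [fracPoissonKernelDeriv, fracPoissonKernelDeriv₂, fracPoissonLogDeriv,
    fracPoissonLogDeriv₂, euclideanInner, inner_zero_right, norm_zero]
  field_simp
  ring

lemma fracPoissonKernel_le_of_dist_le (hγ : 0 ≤ γ) {Z Z' : E × ℝ} (hZ : 0 < Z.2)
    (hdist : dist Z' Z ≤ Z.2 / 2) :
    fracPoissonKernel γ Z' ≤
      2 ^ (2 * γ) * 6 ^ ((finrank ℝ E + 2 * γ) / 2) * fracPoissonKernel γ Z := by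
  obtain ⟨hfst, hsnd⟩ := max_le_iff.1 (Prod.dist_eq (x := Z') (y := Z) ▸ hdist)
  rw [Real.dist_eq, abs_le] at hsnd
  have hZ' : 0 < Z'.2 := by linarith
  have hnorm : ‖Z.1‖ ≤ ‖Z'.1‖ + Z'.2 := by
    linarith [norm_le_norm_add_norm_sub Z'.1 Z.1, dist_eq_norm Z'.1 Z.1]
  have hQ : (‖Z.1‖ ^ 2 + Z.2 ^ 2) / 6 ≤ ‖Z'.1‖ ^ 2 + Z'.2 ^ 2 := by
    nlinarith [pow_le_pow_left₀ (norm_nonneg Z.1) hnorm 2, sq_nonneg (‖Z'.1‖ - Z'.2)]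
  calc fracPoissonKernel γ Z'
      ≤ (2 * Z.2) ^ (2 * γ) *
          ((‖Z.1‖ ^ 2 + Z.2 ^ 2) / 6) ^ (-((finrank ℝ E + 2 * γ) / 2)) :=
        mul_le_mul (rpow_le_rpow hZ'.le (by linarith) (by positivity))
          (rpow_le_rpow_of_nonpos (by positivity) hQ
            (neg_nonpos.2 (by positivity))) (by positivity) (by positivity)
    _ = _ := by
        rw [mul_rpow (by positivity) hZ.le, div_rpow (by positivity) (by positivity),
          rpow_neg (x := 6) (by positivity), div_inv_eq_mul, fracPoissonKernel]
        ring

lemma fracPoissonKernel_le_rpow (hγ : 0 ≤ γ) {Z : E × ℝ} (hZ : 0 < Z.2) :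
    fracPoissonKernel γ Z ≤ (‖Z.1‖ ^ 2 + Z.2 ^ 2) ^ (-(finrank ℝ E / 2 : ℝ)) := by
  have hsnd : Z.2 ^ (2 * γ) ≤ (‖Z.1‖ ^ 2 + Z.2 ^ 2) ^ γ := by
    rw [rpow_mul hZ.le, rpow_two]
    gcongr
    linarith [sq_nonneg ‖Z.1‖]
  calc fracPoissonKernel γ Z
      ≤ (‖Z.1‖ ^ 2 + Z.2 ^ 2) ^ γ * (‖Z.1‖ ^ 2 + Z.2 ^ 2) ^ (-((finrank ℝ E + 2 * γ) / 2)) := by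
        unfold fracPoissonKernel
        gcongr
    _ = _ := by
        rw [← rpow_add (by positivity)]
        ring_nf

lemma fracPoissonKernel_sub_le (hγ : 0 ≤ γ) {X : E × ℝ} (hX : 0 < X.2) {ξ : E}
    (hξ : 1 + ‖ξ‖ ^ 2 ≤ (1 + ‖X.1‖ ^ 2 + X.2 ^ 2) / 4) :
    fracPoissonKernel γ (X.1 - ξ, X.2) ≤
      ((1 + ‖X.1‖ ^ 2 + X.2 ^ 2) / 4) ^ (-(finrank ℝ E / 2 : ℝ)) := by
  have hQ : (1 + ‖X.1‖ ^ 2 + X.2 ^ 2) / 4 ≤ ‖X.1 - ξ‖ ^ 2 + X.2 ^ 2 := by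
    have htri := pow_le_pow_left₀ (norm_nonneg _) (norm_le_norm_sub_add X.1 ξ) 2
    nlinarith [sq_nonneg (‖X.1 - ξ‖ - ‖ξ‖), sq_nonneg X.2]
  exact (fracPoissonKernel_le_rpow hγ (Z := (X.1 - ξ, X.2)) hX).trans
    (rpow_le_rpow_of_nonpos (by positivity) hQ (neg_nonpos.2 (by positivity)))

/-- Where `1 + ‖ξ‖² ≥ (1 + ‖x‖² + y²) / 4` the boundary weight itself decays in `(x, y)`; elsewhere
`‖x - ξ‖² + y²` is comparable to `1 + ‖x‖² + y²` and the kernel decays. -/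
lemma fracPoissonKernel_mul_rpow_le {β s : ℝ} (hγ : 0 ≤ γ) (hβ : 0 ≤ β) (hβs : β ≤ s)
    (hβd : 2 * β ≤ finrank ℝ E) {X : E × ℝ} (hX : 0 < X.2) (ξ : E) :
    fracPoissonKernel γ (X.1 - ξ, X.2) * (1 + ‖ξ‖ ^ 2) ^ (-s) ≤
      4 ^ β * decayWeight β X * (fracPoissonKernel γ (X.1 - ξ, X.2) +
        (1 + ‖ξ‖ ^ 2) ^ (-(finrank ℝ E / 2 + s - β))) := by
  set T := 1 + ‖X.1‖ ^ 2 + X.2 ^ 2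
  have hT : 0 < T / 4 := by positivity
  have hweight : 4 ^ β * decayWeight β X = (T / 4) ^ (-β) := by
    rw [div_rpow (by positivity) (by norm_num), rpow_neg (x := 4) (by norm_num), div_inv_eq_mul,
      mul_comm, decayWeight]
  have hp := fracPoissonKernel_nonneg γ (Z := (X.1 - ξ, X.2)) hX
  rw [hweight, mul_add]
  rcases le_or_gt (T / 4) (1 + ‖ξ‖ ^ 2) with hfar | hnear
  · calc fracPoissonKernel γ (X.1 - ξ, X.2) * (1 + ‖ξ‖ ^ 2) ^ (-s)
        ≤ fracPoissonKernel γ (X.1 - ξ, X.2) * (T / 4) ^ (-β) := by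
          gcongr
          exact (rpow_le_rpow_of_exponent_le (by linarith [sq_nonneg ‖ξ‖]) (neg_le_neg hβs)).trans
            (rpow_le_rpow_of_nonpos hT hfar (neg_nonpos.2 hβ))
      _ = (T / 4) ^ (-β) * fracPoissonKernel γ (X.1 - ξ, X.2) := mul_comm _ _
      _ ≤ _ := le_add_of_nonneg_right (by positivity)
  · have hsplit : (1 + ‖ξ‖ ^ 2) ^ (-s) = (1 + ‖ξ‖ ^ 2) ^ (finrank ℝ E / 2 - β) *
        (1 + ‖ξ‖ ^ 2) ^ (-(finrank ℝ E / 2 + s - β)) := by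
      rw [← rpow_add (by positivity)]
      ring_nf
    calc fracPoissonKernel γ (X.1 - ξ, X.2) * (1 + ‖ξ‖ ^ 2) ^ (-s)
        ≤ (T / 4) ^ (-(finrank ℝ E / 2 : ℝ)) * ((T / 4) ^ (finrank ℝ E / 2 - β) *
            (1 + ‖ξ‖ ^ 2) ^ (-(finrank ℝ E / 2 + s - β))) := by
          rw [hsplit]
          gcongr
          · exact fracPoissonKernel_sub_le hγ hX hnear.le
          · linarith
      _ = (T / 4) ^ (-β) * (1 + ‖ξ‖ ^ 2) ^ (-(finrank ℝ E / 2 + s - β)) := by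
          rw [← mul_assoc, ← rpow_add hT]
          ring_nf
      _ ≤ _ := le_add_of_nonneg_left (by positivity)

variable [MeasurableSpace E]

lemma DominatedBy.exists_abs_le_of_dist_le (hγ : 0 ≤ γ)
    {k : ℕ} {K : E × ℝ → ℝ} (hK : DominatedBy (fracPoissonKernel γ) k K) :
    ∃ C, 0 ≤ C ∧ ∀ Z Z' : E × ℝ, 0 < Z.2 → dist Z' Z ≤ Z.2 / 2 →
      |K Z'| ≤ C / Z.2 ^ k * fracPoissonKernel γ Z := by
  obtain ⟨C, hC₀, hC⟩ := hK.exists_bound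
  refine ⟨C * 2 ^ k * (2 ^ (2 * γ) * 6 ^ ((finrank ℝ E + 2 * γ) / 2)), by positivity,
    fun Z Z' hZ hdist ↦ ?_⟩
  have hsnd := half_snd_le_of_dist_le hdist
  calc |K Z'| ≤ C / Z'.2 ^ k * fracPoissonKernel γ Z' := hC _ _ (by linarith)
    _ ≤ C / (Z.2 / 2) ^ k *
          (2 ^ (2 * γ) * 6 ^ ((finrank ℝ E + 2 * γ) / 2) * fracPoissonKernel γ Z) := by
        gcongr
        · exact fracPoissonKernel_nonneg γ (by linarith)
        · exact fracPoissonKernel_le_of_dist_le hγ hZ hdist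
    _ = _ := by
        rw [div_pow]
        field_simp

variable [BorelSpace E]

lemma dominatedBy_fracPoissonKernel (γ : ℝ) :
    DominatedBy (fracPoissonKernel γ) 0 (fracPoissonKernel (E := E) γ) := by
  refine ⟨by unfold fracPoissonKernel; fun_prop, 1, zero_le_one, fun z y hy ↦ ?_⟩
  simp [abs_of_nonneg (fracPoissonKernel_nonneg γ (Z := (z, y)) hy)]

variable [FiniteDimensional ℝ E]

lemma measurable_euclideanInner (v : E × ℝ) :
    Measurable fun Z : E × ℝ ↦ euclideanInner Z v := by
  unfold euclideanInner
  fun_prop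

lemma dominatedBy_fracPoissonLogDeriv (hγ : 0 ≤ γ) (v : E × ℝ) :
    DominatedBy 1 1 (fracPoissonLogDeriv γ v) := by
  have hmeas := measurable_euclideanInner v
  refine ⟨by unfold fracPoissonLogDeriv; fun_prop,
    2 * γ * |v.2| + (finrank ℝ E + 2 * γ) * √(‖v.1‖ ^ 2 + v.2 ^ 2), by positivity,
    fun z y hy ↦ ?_⟩
  calc |fracPoissonLogDeriv γ v (z, y)|
      ≤ 2 * γ * |v.2 / y| + (finrank ℝ E + 2 * γ) *
          |euclideanInner (z, y) v / (‖z‖ ^ 2 + y ^ 2)| := by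
        refine (abs_sub _ _).trans_eq ?_
        rw [abs_mul (2 * γ), abs_mul (_ + _ : ℝ), abs_of_nonneg (mul_nonneg zero_le_two hγ),
          abs_of_nonneg (a := (_ + _ : ℝ)) (by positivity)]
    _ ≤ 2 * γ * (|v.2| / y) + (finrank ℝ E + 2 * γ) * (√(‖v.1‖ ^ 2 + v.2 ^ 2) / y) := by
        rw [abs_div, abs_of_pos hy]
        gcongr
        exact abs_euclideanInner_div_le (z, y) v hy
    _ = _ := by
        rw [Pi.one_apply]
        ring

lemma dominatedBy_fracPoissonLogDeriv₂ (hγ : 0 ≤ γ) (v : E × ℝ) :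
    DominatedBy 1 2 (fracPoissonLogDeriv₂ γ v) := by
  have hmeas := measurable_euclideanInner v
  refine ⟨by unfold fracPoissonLogDeriv₂; fun_prop,
    2 * γ * v.2 ^ 2 + (finrank ℝ E + 2 * γ) * (3 * (‖v.1‖ ^ 2 + v.2 ^ 2)), by positivity,
    fun z y hy ↦ ?_⟩
  have hB : (euclideanInner (z, y) v / (‖z‖ ^ 2 + y ^ 2)) ^ 2 ≤
      (‖v.1‖ ^ 2 + v.2 ^ 2) / y ^ 2 := by
    rw [← sq_abs, ← sq_sqrt (by positivity : 0 ≤ ‖v.1‖ ^ 2 + v.2 ^ 2), ← div_pow]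
    gcongr
    exact abs_euclideanInner_div_le (z, y) v hy
  have hQ : (‖v.1‖ ^ 2 + v.2 ^ 2) / (‖z‖ ^ 2 + y ^ 2) ≤ (‖v.1‖ ^ 2 + v.2 ^ 2) / y ^ 2 := by
    gcongr
    linarith [sq_nonneg ‖z‖]
  have hQ₀ : 0 ≤ (‖v.1‖ ^ 2 + v.2 ^ 2) / (‖z‖ ^ 2 + y ^ 2) := by positivity
  calc |fracPoissonLogDeriv₂ γ v (z, y)|
      ≤ 2 * γ * (v.2 / y) ^ 2 + (finrank ℝ E + 2 * γ) *
          (3 * ((‖v.1‖ ^ 2 + v.2 ^ 2) / y ^ 2)) := by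
        refine (abs_add_le _ _).trans (add_le_add (by simp [abs_of_nonneg hγ]) ?_)
        rw [abs_mul, abs_of_nonneg (by positivity)]
        gcongr
        exact abs_le.2 ⟨by linarith [sq_nonneg (euclideanInner (z, y) v / (‖z‖ ^ 2 + y ^ 2))],
          by linarith⟩
    _ = _ := by
        rw [Pi.one_apply]
        ring

lemma dominatedBy_fracPoissonKernelDeriv (hγ : 0 ≤ γ) (v : E × ℝ) :
    DominatedBy (fracPoissonKernel γ) 1 (fracPoissonKernelDeriv γ v) := by
  have h := (dominatedBy_fracPoissonKernel γ).mul (dominatedBy_fracPoissonLogDeriv hγ v)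
  rw [mul_one] at h
  exact h

lemma dominatedBy_fracPoissonKernelDeriv₂ (hγ : 0 ≤ γ) (v : E × ℝ) :
    DominatedBy (fracPoissonKernel γ) 2 (fracPoissonKernelDeriv₂ γ v) := by
  have hlog := dominatedBy_fracPoissonLogDeriv hγ v
  have h := (dominatedBy_fracPoissonKernel γ).mul <|
    (mul_one (1 : E × ℝ → ℝ) ▸ hlog.mul hlog).add (dominatedBy_fracPoissonLogDeriv₂ hγ v)
  rw [mul_one, ← sq] at h
  exact h

end PoissonKernel

section HalfSpaceConvolution

variable {E : Type*} [NormedAddCommGroup E] [InnerProductSpace ℝ E] [FiniteDimensional ℝ E]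
  [MeasurableSpace E] [BorelSpace E] {γ β s M : ℝ} {k : ℕ} {ρ K K' : E × ℝ → ℝ} {w : E → ℝ}

/-- The convolution `∫ K(x - ξ, y) w(ξ) dξ` of boundary data `w` with a kernel `K` on the
half-space. -/
noncomputable def halfSpaceConv (K : E × ℝ → ℝ) (w : E → ℝ) (X : E × ℝ) : ℝ :=
  ∫ ξ, K (X.1 - ξ, X.2) * w ξ

lemma measurable_halfSpaceConv (hK : Measurable K) (hw : Measurable w) :
    Measurable (halfSpaceConv K w) :=
  (by fun_prop : Measurable fun p : (E × ℝ) × E ↦ K (p.1.1 - p.2, p.1.2) * w p.2)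
    |>.stronglyMeasurable.integral_prod_right'.measurable

lemma DominatedBy.integrable_mul (hK : DominatedBy ρ k K) (hw : Measurable w) {X : E × ℝ}
    (hX : 0 < X.2) (hint : Integrable fun ξ ↦ ρ (X.1 - ξ, X.2) * |w ξ|) :
    Integrable fun ξ ↦ K (X.1 - ξ, X.2) * w ξ := by
  obtain ⟨C, -, hC⟩ := hK.exists_bound
  refine (hint.const_mul (C / X.2 ^ k)).mono'
    ((hK.measurable.comp (by fun_prop)).mul hw).aestronglyMeasurable (ae_of_all _ fun ξ ↦ ?_)
  rw [norm_mul, norm_eq_abs, norm_eq_abs, ← mul_assoc]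
  gcongr
  exact hC _ _ hX

lemma DominatedBy.conv {σ : E × ℝ → ℝ} (hK : DominatedBy ρ k K) (hw : Measurable w)
    (hint : ∀ X : E × ℝ, 0 < X.2 → Integrable fun ξ ↦ ρ (X.1 - ξ, X.2) * |w ξ|)
    (hσ : ∃ C, 0 ≤ C ∧ ∀ X : E × ℝ, 0 < X.2 → halfSpaceConv ρ (|w ·|) X ≤ C * σ X) :
    DominatedBy σ k (halfSpaceConv K w) := by
  obtain ⟨A, hA, hKA⟩ := hK.exists_bound
  obtain ⟨B, hB, hσB⟩ := hσ
  refine ⟨measurable_halfSpaceConv hK.measurable hw, A * B, by positivity, fun x y hy ↦ ?_⟩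
  calc |halfSpaceConv K w (x, y)| ≤ ∫ ξ, |K (x - ξ, y) * w ξ| :=
        abs_integral_le_integral_abs
    _ ≤ ∫ ξ, A / y ^ k * (ρ (x - ξ, y) * |w ξ|) := by
        refine integral_mono (hK.integrable_mul (X := (x, y)) hw hy (hint _ hy)).abs
          ((hint (x, y) hy).const_mul _) fun ξ ↦ ?_
        simp only [abs_mul, ← mul_assoc]
        gcongr
        exact hKA _ _ hy
    _ = A / y ^ k * halfSpaceConv ρ (|w ·|) (x, y) := integral_const_mul _ _
    _ ≤ A / y ^ k * (B * σ (x, y)) := by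
        gcongr
        exact hσB (x, y) hy
    _ = A * B / y ^ k * σ (x, y) := by ring

lemma hasLineDerivAt_halfSpaceConv (hγ : 0 ≤ γ) {k k' : ℕ} {v : E × ℝ}
    (hK : DominatedBy (fracPoissonKernel γ) k K) (hK' : DominatedBy (fracPoissonKernel γ) k' K')
    (hderiv : ∀ Z, 0 < Z.2 → HasLineDerivAt ℝ K (K' Z) Z v) (hw : Measurable w)
    {X : E × ℝ} (hX : 0 < X.2)
    (hint : Integrable fun ξ ↦ fracPoissonKernel γ (X.1 - ξ, X.2) * |w ξ|) :
    HasLineDerivAt ℝ (halfSpaceConv K w) (halfSpaceConv K' w X) X v := by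
  obtain ⟨C, -, hC⟩ := hK'.exists_abs_le_of_dist_le hγ
  have hδ : 0 < X.2 / 2 / (1 + ‖v‖) := by positivity
  have hshift (t : ℝ) (ξ : E) :
      ((X + t • v).1 - ξ, (X + t • v).2) = (X.1 - ξ, X.2) + t • v := by
    ext <;> simp [add_sub_right_comm]
  have hmeas {L : E × ℝ → ℝ} (hL : Measurable L) (t : ℝ) :
      Measurable fun ξ ↦ L ((X.1 - ξ, X.2) + t • v) * w ξ := by fun_prop
  have h := (hasDerivAt_integral_of_dominated_loc_of_deriv_le
    (F := fun t ξ ↦ K ((X.1 - ξ, X.2) + t • v) * w ξ)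
    (F' := fun t ξ ↦ K' ((X.1 - ξ, X.2) + t • v) * w ξ)
    (bound := fun ξ ↦ C / X.2 ^ k' * (fracPoissonKernel γ (X.1 - ξ, X.2) * |w ξ|))
    (Metric.ball_mem_nhds (0 : ℝ) hδ)
    (.of_forall fun t ↦ (hmeas hK.measurable t).aestronglyMeasurable)
    (by simpa using hK.integrable_mul hw hX hint)
    (hmeas hK'.measurable 0).aestronglyMeasurable
    (ae_of_all _ fun ξ t ht ↦ ?_) (hint.const_mul _) (ae_of_all _ fun ξ t ht ↦ ?_)).2
  · simp only [HasLineDerivAt, halfSpaceConv, hshift]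
    simpa only [zero_smul, add_zero] using h
  · rw [norm_mul, norm_eq_abs, norm_eq_abs, ← mul_assoc]
    gcongr
    exact hC (X.1 - ξ, X.2) _ hX (dist_add_smul_le_half_snd ht)
  · have hdist : dist ((X.1 - ξ, X.2) + t • v) (X.1 - ξ, X.2) ≤ X.2 / 2 :=
      dist_add_smul_le_half_snd ht
    exact (hasDerivAt_comp_add_smul (hderiv _ ((half_pos hX).trans_le
      (half_snd_le_of_dist_le (Z := (X.1 - ξ, X.2)) hdist)))).mul_const (w ξ)

lemma integral_fracPoissonKernel (γ : ℝ) {X : E × ℝ} (hX : 0 < X.2) :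
    ∫ ξ, fracPoissonKernel γ (X.1 - ξ, X.2) =
      ∫ z : E, (1 + ‖z‖ ^ 2) ^ (-((finrank ℝ E + 2 * γ) / 2)) := by
  rw [integral_sub_left_eq_self fun z ↦ fracPoissonKernel γ (z, X.2)]
  simp only [fracPoissonKernel]
  rw [integral_const_mul, integral_norm_sq_add_sq_rpow_neg hX, ← mul_assoc, ← rpow_add hX]
  ring_nf
  simp

lemma integrable_fracPoissonKernel (hγ : 0 < γ) {X : E × ℝ} (hX : 0 < X.2) :
    Integrable fun ξ ↦ fracPoissonKernel γ (X.1 - ξ, X.2) :=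
  ((integrable_norm_sq_add_sq_rpow_neg (by linarith) hX).const_mul (X.2 ^ (2 * γ))).comp_sub_left
    X.1

end HalfSpaceConvolution

section PoissonExtension

lemma abs_le_of_abs_le_mul_one_add_norm_sq_rpow_neg {E : Type*} [NormedAddCommGroup E] {w : E → ℝ}
    {M s : ℝ} (hs : 0 ≤ s) (hwM : ∀ ξ, |w ξ| ≤ M * (1 + ‖ξ‖ ^ 2) ^ (-s)) (ξ : E) : |w ξ| ≤ M :=
  (hwM ξ).trans <| mul_le_of_le_one_right (by simpa using (abs_nonneg _).trans (hwM 0)) <|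
    rpow_le_one_of_one_le_of_nonpos (by linarith [sq_nonneg ‖ξ‖]) (by linarith)

variable {E ι : Type*} [NormedAddCommGroup E] [InnerProductSpace ℝ E] [FiniteDimensional ℝ E]
  [MeasurableSpace E] [BorelSpace E] [Fintype ι] {γ β s M b : ℝ} {w : E → ℝ}

lemma integrable_fracPoissonKernel_mul_abs (hγ : 0 < γ) (hw : Measurable w) (hM : ∀ ξ, |w ξ| ≤ M)
    {X : E × ℝ} (hX : 0 < X.2) :
    Integrable fun ξ ↦ fracPoissonKernel γ (X.1 - ξ, X.2) * |w ξ| :=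
  (integrable_fracPoissonKernel hγ hX).mul_bdd hw.abs.aestronglyMeasurable
    (ae_of_all _ fun ξ ↦ by simpa using hM ξ)

lemma exists_halfSpaceConv_fracPoissonKernel_abs_le (hγ : 0 < γ) (hw : Measurable w)
    (hwM : ∀ ξ, |w ξ| ≤ M * (1 + ‖ξ‖ ^ 2) ^ (-s)) (hβ : 0 ≤ β) (hβs : β < s)
    (hβd : 2 * β ≤ finrank ℝ E) :
    ∃ C, 0 ≤ C ∧ ∀ X : E × ℝ, 0 < X.2 →
      halfSpaceConv (fracPoissonKernel γ) (|w ·|) X ≤ C * decayWeight β X := by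
  have hM : 0 ≤ M := by simpa using (abs_nonneg _).trans (hwM 0)
  have hwM' := abs_le_of_abs_le_mul_one_add_norm_sq_rpow_neg (hβ.trans hβs.le) hwM
  have htail : Integrable fun ξ : E ↦ (1 + ‖ξ‖ ^ 2) ^ (-(finrank ℝ E / 2 + s - β)) :=
    integrable_one_add_norm_sq_rpow_neg (by linarith)
  refine ⟨M * 4 ^ β * ((∫ z : E, (1 + ‖z‖ ^ 2) ^ (-((finrank ℝ E + 2 * γ) / 2))) +
    ∫ ξ : E, (1 + ‖ξ‖ ^ 2) ^ (-(finrank ℝ E / 2 + s - β))), by positivity, fun X hX ↦ ?_⟩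
  have hker := integrable_fracPoissonKernel hγ hX
  calc halfSpaceConv (fracPoissonKernel γ) (|w ·|) X
      ≤ ∫ ξ, M * (4 ^ β * decayWeight β X) * (fracPoissonKernel γ (X.1 - ξ, X.2) +
          (1 + ‖ξ‖ ^ 2) ^ (-(finrank ℝ E / 2 + s - β))) := by
        refine integral_mono (integrable_fracPoissonKernel_mul_abs hγ hw hwM' hX)
          ((hker.add htail).const_mul _) fun ξ ↦ ?_
        calc fracPoissonKernel γ (X.1 - ξ, X.2) * |w ξ|
            ≤ fracPoissonKernel γ (X.1 - ξ, X.2) * (M * (1 + ‖ξ‖ ^ 2) ^ (-s)) :=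
              mul_le_mul_of_nonneg_left (hwM ξ) (fracPoissonKernel_nonneg γ hX)
          _ = M * (fracPoissonKernel γ (X.1 - ξ, X.2) * (1 + ‖ξ‖ ^ 2) ^ (-s)) := by ring
          _ ≤ _ := by
              rw [mul_assoc M]
              exact mul_le_mul_of_nonneg_left
                (fracPoissonKernel_mul_rpow_le hγ.le hβ hβs.le hβd hX ξ) hM
    _ = _ := by
        rw [integral_const_mul, integral_add hker htail, integral_fracPoissonKernel γ hX]
        ring

lemma sum_halfSpaceConv_fracPoissonKernelDeriv₂ (e : OrthonormalBasis ι ℝ E) (hγ : 0 ≤ γ)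
    (hw : Measurable w) {X : E × ℝ} (hX : 0 < X.2)
    (hint : Integrable fun ξ ↦ fracPoissonKernel γ (X.1 - ξ, X.2) * |w ξ|) :
    (∑ i, halfSpaceConv (fracPoissonKernelDeriv₂ γ (e i, 0)) w X) +
      halfSpaceConv (fracPoissonKernelDeriv₂ γ (0, 1)) w X +
      (1 - 2 * γ) / X.2 * halfSpaceConv (fracPoissonKernelDeriv γ (0, 1)) w X = 0 := by
  have hint' := ((dominatedBy_fracPoissonKernelDeriv hγ (0, 1)).integrable_mul hw hX hint).const_mul
    ((1 - 2 * γ) / X.2)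
  have hint₂ (v) := (dominatedBy_fracPoissonKernelDeriv₂ hγ v).integrable_mul hw hX hint
  have hsum := integrable_finsetSum Finset.univ fun i _ ↦ hint₂ (e i, 0)
  simp only [halfSpaceConv]
  rw [← integral_const_mul, ← integral_finsetSum _ fun i _ ↦ hint₂ (e i, 0),
    ← integral_add hsum (hint₂ (0, 1)), ← integral_add (by exact hsum.add (hint₂ (0, 1))) hint']
  refine integral_eq_zero_of_ae (ae_of_all _ fun ξ ↦ ?_)
  have hpde := sum_fracPoissonKernelDeriv₂ e γ (Z := (X.1 - ξ, X.2)) hX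
  beta_reduce
  rw [← Finset.sum_mul, ← mul_assoc, ← add_mul, ← add_mul, hpde, zero_mul, Pi.zero_apply]

theorem isDecayingSolution_halfSpaceConv (e : OrthonormalBasis ι ℝ E) (hγ : 0 < γ)
    (hw : Measurable w) (hwM : ∀ ξ, |w ξ| ≤ M * (1 + ‖ξ‖ ^ 2) ^ (-s)) (hβ : 0 ≤ β) (hβs : β < s)
    (hβd : 2 * β ≤ finrank ℝ E) :
    IsDecayingSolution (1 - 2 * γ) β e (halfSpaceConv (fracPoissonKernel γ) w)
      (fun v ↦ halfSpaceConv (fracPoissonKernelDeriv γ v) w)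
      (fun v ↦ halfSpaceConv (fracPoissonKernelDeriv₂ γ v) w) := by
  have hwM' := abs_le_of_abs_le_mul_one_add_norm_sq_rpow_neg (hβ.trans hβs.le) hwM
  have hint (X : E × ℝ) (hX : 0 < X.2) := integrable_fracPoissonKernel_mul_abs hγ hw hwM' hX
  have hdecay := exists_halfSpaceConv_fracPoissonKernel_abs_le hγ hw hwM hβ hβs hβd
  have hK := dominatedBy_fracPoissonKernel (E := E) γ
  have hK' := dominatedBy_fracPoissonKernelDeriv (E := E) hγ.le
  have hK₂ := dominatedBy_fracPoissonKernelDeriv₂ (E := E) hγ.le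
  refine ⟨hK.conv hw hint hdecay, fun v ↦ (hK' v).conv hw hint hdecay,
    fun v ↦ (hK₂ v).conv hw hint hdecay,
    fun v X hX ↦ hasLineDerivAt_halfSpaceConv hγ.le hK (hK' v)
      (fun _ ↦ hasLineDerivAt_fracPoissonKernel γ v) hw hX (hint X hX),
    fun v X hX ↦ hasLineDerivAt_halfSpaceConv hγ.le (hK' v) (hK₂ v)
      (fun _ ↦ hasLineDerivAt_fracPoissonKernelDeriv γ v) hw hX (hint X hX),
    fun X hX ↦ sum_halfSpaceConv_fracPoissonKernelDeriv₂ e hγ.le hw hX (hint X hX)⟩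

theorem stmt_16_general (e : OrthonormalBasis ι ℝ E) (hγ : 0 < γ) (hw : Measurable w)
    (hwM : ∀ ξ, |w ξ| ≤ M * (1 + ‖ξ‖ ^ 2) ^ (-s)) (hb : 1 < b) (hbd : b < finrank ℝ E + 1)
    (hbs : finrank ℝ E + b - 1 < 4 * s) {U : E → ℝ → ℝ}
    (hU : ∀ x y, U x y = halfSpaceConv (fracPoissonKernel γ) w (x, y)) :
    ∫ y in Ioi 0, ∫ x, y ^ b *
      ((∑ i, deriv (fun t : ℝ ↦ U (x + t • e i) y) 0 ^ 2) + deriv (U x) y ^ 2) =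
    (b - (1 - 2 * γ)) * (b - 1) / 2 * ∫ y in Ioi 0, ∫ x, y ^ (b - 2) * U x y ^ 2 := by
  obtain ⟨β, hbβ, hβ⟩ : ∃ β, (finrank ℝ E + b - 1) / 4 < β ∧ β < min s (finrank ℝ E / 2) :=
    exists_between (lt_min (by linarith) (by linarith))
  obtain ⟨hβs, hβd⟩ := lt_min_iff.1 hβ
  have hβ₀ : 0 ≤ β := by linarith [(finrank ℝ E).cast_nonneg (α := ℝ)]
  have hsol := isDecayingSolution_halfSpaceConv e hγ hw hwM hβ₀ hβs (by linarith)
  have hfst {x y} (hy : 0 < y) (i : ι) : deriv (fun t : ℝ ↦ U (x + t • e i) y) 0 =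
      halfSpaceConv (fracPoissonKernelDeriv γ (e i, 0)) w (x, y) := by
    simpa [HasLineDerivAt, hU] using (hsol.hasLineDerivAt (e i, 0) (x, y) hy).deriv
  have hsnd {x y} (hy : 0 < y) :
      deriv (U x) y = halfSpaceConv (fracPoissonKernelDeriv γ (0, 1)) w (x, y) := by
    simpa only [← hU] using (hsol.hasDerivAt_snd hy x).deriv
  simp only [integral_const_mul, hU _ _]
  rw [← hsol.integral_rpow_mul_gradNormSq hb (by linarith)]
  refine setIntegral_congr_fun measurableSet_Ioi fun y hy ↦ ?_
  simp only [gradNormSq, ← hfst hy, ← hsnd hy, ← hU]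

end PoissonExtension

open MeasureTheory Real in
theorem stmt_16 (γ : ℝ) (hγ : γ ∈ Set.Ioo (0:ℝ) 1) (a : ℝ) (ha : a = 1 - 2*γ)
    (n : ℕ) (hn : 4 + 2*γ < (n:ℝ))
    (w : EuclideanSpace ℝ (Fin n) → ℝ)
    (hw : ∀ x : EuclideanSpace ℝ (Fin n), w x = (1 + ‖x‖^2) ^ (-(((n:ℝ) - 2*γ)/2)))
    (U : EuclideanSpace ℝ (Fin n) → ℝ → ℝ)
    (hU : ∀ x : EuclideanSpace ℝ (Fin n), ∀ y : ℝ,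
      U x y = ∫ ξ : EuclideanSpace ℝ (Fin n),
        y ^ (2*γ) * (‖x - ξ‖^2 + y^2) ^ (-(((n:ℝ) + 2*γ)/2)) * w ξ) :
    ∫ y in Set.Ioi (0:ℝ), ∫ x : EuclideanSpace ℝ (Fin n),
      y ^ (a+3) * ((∑ i : Fin n,
        (deriv (fun t : ℝ => U (x + t • EuclideanSpace.single i 1) y) 0)^2)
        + (deriv (U x) y)^2) =
    (3*(a+2)/2) * ∫ y in Set.Ioi (0:ℝ), ∫ x : EuclideanSpace ℝ (Fin n),
      y ^ (a+1) * (U x y)^2 := by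
  obtain ⟨hγ₀, hγ₁⟩ := hγ
  have hwmeas : Measurable w := by
    rw [funext hw]
    fun_prop
  have hwle (ξ) : |w ξ| ≤ 1 * (1 + ‖ξ‖ ^ 2) ^ (-(((n : ℝ) - 2 * γ) / 2)) := by
    rw [one_mul, hw, abs_of_nonneg (by positivity)]
  have h := stmt_16_general (b := a + 3) (U := U) (EuclideanSpace.basisFun (Fin n) ℝ) hγ₀ hwmeas
    hwle (by linarith) (by rw [finrank_euclideanSpace_fin]; linarith)
    (by rw [finrank_euclideanSpace_fin]; linarith)
    (by simpa only [halfSpaceConv, fracPoissonKernel, finrank_euclideanSpace_fin] using hU)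
  simp only [EuclideanSpace.basisFun_apply] at h
  rw [h, ← ha, show a + 3 - 2 = a + 1 by ring,
    show (a + 3 - a) * (a + 3 - 1) / 2 = 3 * (a + 2) / 2 by ring]
end

section
/- Let n ≥ 1 be an integer, γ ∈ (0,1), a = 1 − 2γ, and let w : ℝⁿ → ℝ be a bounded continuous function. Define U : ℝⁿ × (0,∞) → ℝ by U(x,y) = ∫_{ℝⁿ} y^{2γ}·(|x−ξ|² + y²)^{−(n+2γ)/2}·w(ξ) dξ. Then U is smooth on ℝⁿ × (0,∞) and satisfies the degenerate elliptic equation Δ_x U(x,y) + ∂²_{yy} U(x,y) + (a/y)·∂_y U(x,y) = 0 for all x ∈ ℝⁿ and y > 0; equivalently, div(y^a·∇U) = 0 in the upper half-space ℝ^{n+1}_+. -/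
/-!
In formal dimension `N = n + 2 + 2γ` the power `‖q‖ ^ (2 - N) = ‖q‖ ^ (-(n + 2γ))` is the
radial harmonic function: on `ℝⁿ × (0, ∞)` it is annihilated by `Δ + ((1 + 2γ) / y) ∂_y`. This
operator commutes with translations along the boundary, so it also annihilates the superposition
`K` of boundary translates of the kernel with density `w`. Multiplication by `y ^ (2γ)`, which turns
`K` into `U`, conjugates it into `Δ + ((1 - 2γ) / y) ∂_y`.

Differentiation under the integral sign is possible to all orders because the derivative of a smooth
homogeneous kernel is again one, of degree one less; compactness of the unit sphere bounds such a
kernel of degree `e` by `C ‖q‖ ^ e`, and away from the boundary this is comparable, uniformly in the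
source `ξ`, to `(1 + ‖ξ‖) ^ e`.
-/

open Filter MeasureTheory Metric Set Topology
open scoped ContDiff RealInnerProductSpace Laplacian

section Homogeneous

variable {V F : Type*} [NormedAddCommGroup V] [NormedSpace ℝ V] [NormedAddCommGroup F]
  [NormedSpace ℝ F] {e : ℝ} {f : V → F} {p : V}

/-- Functions that are smooth and positively homogeneous of degree `e` away from the origin; their
values at the origin are irrelevant. -/
structure IsSmoothHomogeneous (e : ℝ) (f : V → F) : Prop where
  contDiffOn : ContDiffOn ℝ ∞ f {0}ᶜ
  map_smul : ∀ ⦃c : ℝ⦄, 0 < c → ∀ ⦃p : V⦄, p ≠ 0 → f (c • p) = c ^ e • f p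

namespace IsSmoothHomogeneous

lemma contDiffAt (hf : IsSmoothHomogeneous e f) (hp : p ≠ 0) : ContDiffAt ℝ ∞ f p :=
  hf.contDiffOn.contDiffAt (isOpen_compl_singleton.mem_nhds hp)

lemma differentiableAt (hf : IsSmoothHomogeneous e f) (hp : p ≠ 0) : DifferentiableAt ℝ f p :=
  (hf.contDiffAt hp).differentiableAt (by simp)

protected lemma fderiv (hf : IsSmoothHomogeneous e f) :
    IsSmoothHomogeneous (e - 1) (fderiv ℝ f) where
  contDiffOn :=
    ((contDiffOn_infty_iff_fderiv_of_isOpen isOpen_compl_singleton).1 hf.contDiffOn).2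
  map_smul c hc p hp := by
    have h_eq : (fun q => f (c • q)) =ᶠ[𝓝 p] fun q => c ^ e • f q := by
      filter_upwards [isOpen_compl_singleton.mem_nhds hp] with q hq using hf.map_smul hc hq
    have h_deriv : c • fderiv ℝ f (c • p) = c ^ e • fderiv ℝ f p := by
      rw [← fderiv_comp_smul, h_eq.fderiv_eq, fderiv_fun_const_smul (hf.differentiableAt hp)]
    rw [Real.rpow_sub_one hc.ne', div_eq_inv_mul, mul_smul, ← h_deriv, inv_smul_smul₀ hc.ne']

lemma clm_comp {G : Type*} [NormedAddCommGroup G] [NormedSpace ℝ G] (hf : IsSmoothHomogeneous e f)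
    (L : F →L[ℝ] G) : IsSmoothHomogeneous e (L ∘ f) where
  contDiffOn := L.contDiff.comp_contDiffOn hf.contDiffOn
  map_smul c hc p hp := by simp only [Function.comp_apply, hf.map_smul hc hp, L.map_smul]

protected lemma iteratedFDeriv (hf : IsSmoothHomogeneous e f) (m : ℕ) :
    IsSmoothHomogeneous (e - m) (iteratedFDeriv ℝ m f) := by
  induction m with
  | zero =>
    rw [Nat.cast_zero, sub_zero, iteratedFDeriv_zero_eq_comp]
    exact hf.clm_comp
      (continuousMultilinearCurryFin0 ℝ V F).symm.toContinuousLinearEquiv.toContinuousLinearMap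
  | succ m ih =>
    rw [Nat.cast_succ, ← sub_sub, iteratedFDeriv_succ_eq_comp_left]
    exact ih.fderiv.clm_comp (continuousMultilinearCurryLeftEquiv ℝ
      (fun _ : Fin (m + 1) => V) F).symm.toContinuousLinearEquiv.toContinuousLinearMap

lemma exists_norm_le [ProperSpace V] (hf : IsSmoothHomogeneous e f) :
    ∃ C, 0 ≤ C ∧ ∀ p ≠ 0, ‖f p‖ ≤ C * ‖p‖ ^ e := by
  have h_sphere : sphere (0 : V) 1 ⊆ {0}ᶜ := fun p hp => ne_zero_of_mem_unit_sphere ⟨p, hp⟩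
  obtain ⟨C, hC⟩ := (isCompact_sphere (0 : V) 1).exists_bound_of_continuousOn
    (hf.contDiffOn.continuousOn.mono h_sphere)
  refine ⟨max C 0, le_max_right _ _, fun p hp => ?_⟩
  have hp' : 0 < ‖p‖ := norm_pos_iff.2 hp
  have h_unit : ‖‖p‖⁻¹ • p‖ = 1 := norm_smul_inv_norm (𝕜 := ℝ) hp
  calc ‖f p‖ = ‖f (‖p‖ • ‖p‖⁻¹ • p)‖ := by rw [smul_inv_smul₀ hp'.ne']
    _ = ‖p‖ ^ e * ‖f (‖p‖⁻¹ • p)‖ := by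
      rw [hf.map_smul hp' (h_sphere (by simpa using h_unit)), norm_smul,
        Real.norm_of_nonneg (by positivity)]
    _ ≤ ‖p‖ ^ e * max C 0 := by
      gcongr
      exact (hC _ (by simpa using h_unit)).trans (le_max_left _ _)
    _ = max C 0 * ‖p‖ ^ e := mul_comm _ _

end IsSmoothHomogeneous

end Homogeneous

section Separation

variable {V : Type*} [NormedAddCommGroup V] {S : Set V} {p q : V}

lemma eventually_notMem_closure (hp : p ∉ closure S) : ∀ᶠ p' in 𝓝 p, p' ∉ closure S :=
  isClosed_closure.isOpen_compl.mem_nhds hp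

lemma sub_ne_zero_of_notMem_closure (hp : p ∉ closure S) (hq : q ∈ S) : p - q ≠ 0 :=
  sub_ne_zero.2 fun h => hp (h ▸ subset_closure hq)

lemma exists_norm_sub_comparable (hp : p ∉ closure S) :
    ∃ M, 0 < M ∧ ∀ᶠ p' in 𝓝 p, ∀ q ∈ S, ‖p' - q‖ ≤ M * (1 + ‖q‖) ∧ 1 + ‖q‖ ≤ M * ‖p' - q‖ := by
  obtain ⟨ε, hε, h_ball⟩ := Metric.isOpen_iff.1 isClosed_closure.isOpen_compl p hp
  set R := 1 + ‖p‖ + ε / 2 with hR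
  refine ⟨R + R / (ε / 2) + 1, by positivity, ?_⟩
  filter_upwards [ball_mem_nhds p (half_pos hε)] with p' hp' q hq
  rw [mem_ball, dist_eq_norm] at hp'
  have h_far : ε ≤ ‖q - p‖ := by
    by_contra! h
    exact h_ball (by rwa [mem_ball, dist_eq_norm]) (subset_closure hq)
  have h_sep : ε / 2 ≤ ‖p' - q‖ := by
    linarith [norm_sub_le_norm_sub_add_norm_sub q p' p, norm_sub_rev q p']
  have h_norm : 1 + ‖p'‖ ≤ R := by linarith [norm_le_insert' p' p]
  have h_div : R ≤ R / (ε / 2) * ‖p' - q‖ := by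
    rw [div_mul_eq_mul_div, le_div_iff₀ (half_pos hε)]
    gcongr
  have : 0 ≤ R / (ε / 2) * ‖q‖ := by positivity
  have : 0 ≤ R * ‖p' - q‖ := by positivity
  constructor
  · nlinarith [norm_sub_le p' q, norm_nonneg q, norm_nonneg p]
  · linarith [norm_le_insert p' q]

lemma exists_norm_sub_rpow_le (hp : p ∉ closure S) (e : ℝ) :
    ∃ C, ∀ᶠ p' in 𝓝 p, ∀ q ∈ S, ‖p' - q‖ ^ e ≤ C * (1 + ‖q‖) ^ e := by
  obtain ⟨M, hM, h_cmp⟩ := exists_norm_sub_comparable hp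
  rcases le_total 0 e with he | he
  · refine ⟨M ^ e, h_cmp.mono fun p' h q hq => ?_⟩
    rw [← Real.mul_rpow hM.le (by positivity)]
    exact Real.rpow_le_rpow (norm_nonneg _) (h q hq).1 he
  · refine ⟨M⁻¹ ^ e, h_cmp.mono fun p' h q hq => ?_⟩
    rw [← Real.mul_rpow (by positivity) (by positivity)]
    exact Real.rpow_le_rpow_of_nonpos (by positivity) ((inv_mul_le_iff₀ hM).2 (h q hq).2) he

lemma IsSmoothHomogeneous.exists_norm_sub_le [NormedSpace ℝ V] [ProperSpace V] {F : Type*}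
    [NormedAddCommGroup F] [NormedSpace ℝ F] {f : V → F} {e : ℝ} (hf : IsSmoothHomogeneous e f)
    (hp : p ∉ closure S) :
    ∃ C, ∀ᶠ p' in 𝓝 p, ∀ q ∈ S, ‖f (p' - q)‖ ≤ C * (1 + ‖q‖) ^ e := by
  obtain ⟨A, hA, hfA⟩ := hf.exists_norm_le
  obtain ⟨B, hB⟩ := exists_norm_sub_rpow_le hp e
  refine ⟨A * B, ?_⟩
  filter_upwards [hB, eventually_notMem_closure hp] with p' hp' h_off q hq
  calc ‖f (p' - q)‖ ≤ A * ‖p' - q‖ ^ e := hfA _ (sub_ne_zero_of_notMem_closure h_off hq)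
    _ ≤ A * (B * (1 + ‖q‖) ^ e) := by gcongr; exact hp' q hq
    _ = A * B * (1 + ‖q‖) ^ e := by ring

end Separation

section Potential

variable {X V F : Type*} [MeasurableSpace X] [NormedAddCommGroup V] [NormedAddCommGroup F]
  [NormedSpace ℝ F] {μ : Measure X} {z : X → V} {w : X → ℝ} {f : V → F} {e : ℝ} {p : V}

/-- The potential with kernel `f` generated by sources of density `w`, the source labelled `ξ`
being placed at the point `z ξ`. -/
noncomputable def potential (μ : Measure X) (z : X → V) (w : X → ℝ) (f : V → F) (p : V) : F :=
  ∫ ξ, w ξ • f (p - z ξ) ∂μ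

lemma potential_congr {g : V → F} (hfg : ∀ q ≠ 0, f q = g q) (hp : p ∉ closure (range z)) :
    potential μ z w f p = potential μ z w g p :=
  integral_congr_ae <| .of_forall fun ξ => by
    simp only [hfg _ (sub_ne_zero_of_notMem_closure hp (mem_range_self ξ))]

lemma linearIsometryEquiv_potential {G : Type*} [NormedAddCommGroup G] [NormedSpace ℝ G]
    (L : F ≃ₗᵢ[ℝ] G) (μ : Measure X) (z : X → V) (w : X → ℝ) (f : V → F) (p : V) :
    L (potential μ z w f p) = potential μ z w (fun q => L (f q)) p := by
  have h_comm := L.toContinuousLinearEquiv.integral_comp_comm (μ := μ) fun ξ => w ξ • f (p - z ξ)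
  simpa only [potential, LinearIsometryEquiv.coe_toContinuousLinearEquiv, L.map_smul]
    using h_comm.symm

lemma IsSmoothHomogeneous.exists_integrable_bound [NormedSpace ℝ V] [ProperSpace V]
    (hf : IsSmoothHomogeneous e f)
    (hw : Integrable (fun ξ => (1 + ‖z ξ‖) ^ e * w ξ) μ) (hp : p ∉ closure (range z)) :
    ∃ b : X → ℝ, Integrable b μ ∧ ∀ᶠ p' in 𝓝 p, ∀ ξ, ‖w ξ • f (p' - z ξ)‖ ≤ b ξ := by
  obtain ⟨C, hC⟩ := hf.exists_norm_sub_le hp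
  refine ⟨_, hw.norm.const_mul C, hC.mono fun p' hp' ξ => ?_⟩
  calc ‖w ξ • f (p' - z ξ)‖ ≤ ‖w ξ‖ * (C * (1 + ‖z ξ‖) ^ e) := by
        rw [norm_smul]
        gcongr
        exact hp' _ (mem_range_self ξ)
    _ = C * ‖(1 + ‖z ξ‖) ^ e * w ξ‖ := by
      rw [norm_mul, Real.norm_of_nonneg (by positivity : 0 ≤ (1 + ‖z ξ‖) ^ e)]
      ring

variable [TopologicalSpace X] [OpensMeasurableSpace X]

lemma integrable_weight_of_le (hz : Continuous z)
    (hw : Integrable (fun ξ => (1 + ‖z ξ‖) ^ e * w ξ) μ) {e' : ℝ} (he : e' ≤ e) :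
    Integrable (fun ξ => (1 + ‖z ξ‖) ^ e' * w ξ) μ := by
  have h_bdd : ∀ ξ, ‖(1 + ‖z ξ‖) ^ (e' - e)‖ ≤ 1 := fun ξ => by
    rw [Real.norm_of_nonneg (by positivity)]
    exact Real.rpow_le_one_of_one_le_of_nonpos (by simp) (by linarith)
  have h_cont : Continuous fun ξ => (1 + ‖z ξ‖) ^ (e' - e) :=
    (by fun_prop : Continuous fun ξ => 1 + ‖z ξ‖).rpow_const fun ξ => .inl (by positivity)
  refine (hw.bdd_mul h_cont.aestronglyMeasurable (.of_forall h_bdd)).congr (.of_forall fun ξ => ?_)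
  dsimp only
  rw [← mul_assoc, ← Real.rpow_add (by positivity), sub_add_cancel]

lemma aestronglyMeasurable_of_integrable_weight (hz : Continuous z)
    (hw : Integrable (fun ξ => (1 + ‖z ξ‖) ^ e * w ξ) μ) : AEStronglyMeasurable w μ := by
  have h_cont : Continuous fun ξ => (1 + ‖z ξ‖) ^ (-e) :=
    (by fun_prop : Continuous fun ξ => 1 + ‖z ξ‖).rpow_const fun ξ => .inl (by positivity)
  refine (h_cont.aestronglyMeasurable.mul hw.aestronglyMeasurable).congr (.of_forall fun ξ => ?_)
  rw [Pi.mul_apply, ← mul_assoc, ← Real.rpow_add (by positivity), neg_add_cancel, Real.rpow_zero,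
    one_mul]

variable [NormedSpace ℝ V] [SecondCountableTopology X]

namespace IsSmoothHomogeneous

lemma aestronglyMeasurable_smul_sub (hf : IsSmoothHomogeneous e f) (hz : Continuous z)
    (hw : AEStronglyMeasurable w μ) (hp : p ∉ closure (range z)) :
    AEStronglyMeasurable (fun ξ => w ξ • f (p - z ξ)) μ :=
  hw.smul (hf.contDiffOn.continuousOn.comp_continuous (by fun_prop) fun ξ =>
    sub_ne_zero_of_notMem_closure hp (mem_range_self ξ)).aestronglyMeasurable

variable [ProperSpace V]

lemma integrable_smul_sub (hf : IsSmoothHomogeneous e f) (hz : Continuous z)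
    (hw : Integrable (fun ξ => (1 + ‖z ξ‖) ^ e * w ξ) μ) (hp : p ∉ closure (range z)) :
    Integrable (fun ξ => w ξ • f (p - z ξ)) μ := by
  obtain ⟨b, hb, hfb⟩ := hf.exists_integrable_bound hw hp
  exact hb.mono' (hf.aestronglyMeasurable_smul_sub hz
    (aestronglyMeasurable_of_integrable_weight hz hw) hp) (.of_forall hfb.self_of_nhds)

lemma continuousLinearMap_potential [CompleteSpace F] {G : Type*} [NormedAddCommGroup G]
    [NormedSpace ℝ G] [CompleteSpace G] (hf : IsSmoothHomogeneous e f) (hz : Continuous z)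
    (hw : Integrable (fun ξ => (1 + ‖z ξ‖) ^ e * w ξ) μ) (hp : p ∉ closure (range z))
    (L : F →L[ℝ] G) :
    L (potential μ z w f p) = potential μ z w (fun q => L (f q)) p := by
  rw [potential, ← L.integral_comp_comm (hf.integrable_smul_sub hz hw hp)]
  simp only [potential, L.map_smul]

lemma hasFDerivAt_potential (hf : IsSmoothHomogeneous e f) (hz : Continuous z)
    (hw : Integrable (fun ξ => (1 + ‖z ξ‖) ^ e * w ξ) μ) (hp : p ∉ closure (range z)) :
    HasFDerivAt (potential μ z w f) (potential μ z w (fderiv ℝ f) p) p := by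
  have hw_meas := aestronglyMeasurable_of_integrable_weight hz hw
  obtain ⟨b, hb, hfb⟩ :=
    hf.fderiv.exists_integrable_bound (integrable_weight_of_le hz hw (sub_one_lt e).le) hp
  refine hasFDerivAt_integral_of_dominated_of_fderiv_le
    ((eventually_notMem_closure hp).and hfb)
    ((eventually_notMem_closure hp).mono fun p' => hf.aestronglyMeasurable_smul_sub hz hw_meas)
    (hf.integrable_smul_sub hz hw hp) (hf.fderiv.aestronglyMeasurable_smul_sub hz hw_meas hp)
    (.of_forall fun ξ p' hp' => hp'.2 ξ) hb (.of_forall fun ξ p' hp' => ?_)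
  have h_ne : p' - z ξ ≠ 0 := sub_ne_zero_of_notMem_closure hp'.1 (mem_range_self ξ)
  exact ((hasFDerivAt_comp_sub (z ξ)).2 (hf.differentiableAt h_ne).hasFDerivAt).const_smul (w ξ)

lemma fderiv_potential (hf : IsSmoothHomogeneous e f) (hz : Continuous z)
    (hw : Integrable (fun ξ => (1 + ‖z ξ‖) ^ e * w ξ) μ) (hp : p ∉ closure (range z)) :
    fderiv ℝ (potential μ z w f) p = potential μ z w (fderiv ℝ f) p :=
  (hf.hasFDerivAt_potential hz hw hp).fderiv

lemma fderiv_fderiv_potential (hf : IsSmoothHomogeneous e f) (hz : Continuous z)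
    (hw : Integrable (fun ξ => (1 + ‖z ξ‖) ^ e * w ξ) μ) (hp : p ∉ closure (range z)) :
    fderiv ℝ (fderiv ℝ (potential μ z w f)) p = potential μ z w (fderiv ℝ (fderiv ℝ f)) p := by
  have h_fderiv : fderiv ℝ (potential μ z w f) =ᶠ[𝓝 p] potential μ z w (fderiv ℝ f) :=
    (eventually_notMem_closure hp).mono fun p' => hf.fderiv_potential hz hw
  rw [h_fderiv.fderiv_eq,
    hf.fderiv.fderiv_potential hz (integrable_weight_of_le hz hw (sub_one_lt e).le) hp]

lemma hasFTaylorSeriesUpToOn_potential (hf : IsSmoothHomogeneous e f) (hz : Continuous z)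
    (hw : Integrable (fun ξ => (1 + ‖z ξ‖) ^ e * w ξ) μ) :
    HasFTaylorSeriesUpToOn ∞ (potential μ z w f)
      (fun p m => potential μ z w (iteratedFDeriv ℝ m f) p) (closure (range z))ᶜ := by
  have h_deriv : ∀ (m : ℕ), ∀ p ∉ closure (range z),
      HasFDerivAt (potential μ z w (iteratedFDeriv ℝ m f))
        (potential μ z w (iteratedFDeriv ℝ (m + 1) f) p).curryLeft p := fun m p hp => by
    have hw' := integrable_weight_of_le hz hw (sub_le_self e (Nat.cast_nonneg m))
    refine ((hf.iteratedFDeriv m).hasFDerivAt_potential hz hw' hp).congr_fderiv ?_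
    exact (linearIsometryEquiv_potential (G := V →L[ℝ] V [×m]→L[ℝ] F)
      (continuousMultilinearCurryLeftEquiv ℝ (fun _ => V) F)
      μ z w (iteratedFDeriv ℝ (m + 1) f) p).symm
  refine ⟨fun p _ => ?_, fun m _ p hp => (h_deriv m p hp).hasFDerivWithinAt,
    fun m _ p hp => (h_deriv m p hp).continuousAt.continuousWithinAt⟩
  exact linearIsometryEquiv_potential (continuousMultilinearCurryFin0 ℝ V F) μ z w _ p

lemma contDiffOn_potential (hf : IsSmoothHomogeneous e f) (hz : Continuous z)
    (hw : Integrable (fun ξ => (1 + ‖z ξ‖) ^ e * w ξ) μ) :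
    ContDiffOn ℝ ∞ (potential μ z w f) (closure (range z))ᶜ :=
  (hf.hasFTaylorSeriesUpToOn_potential hz hw).contDiffOn

end IsSmoothHomogeneous

end Potential

section SecondDerivatives

variable {V F : Type*} [NormedAddCommGroup V] [NormedSpace ℝ V] [NormedAddCommGroup F]
  [NormedSpace ℝ F] {f : V → F}

lemma hasDerivAt_comp_add_smul_s17 {p v : V} {t : ℝ} (hf : DifferentiableAt ℝ f (p + t • v)) :
    HasDerivAt (fun s : ℝ => f (p + s • v)) (fderiv ℝ f (p + t • v) v) t := by
  have h_line : HasDerivAt (fun s : ℝ => p + s • v) v t := by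
    simpa using ((hasDerivAt_id t).smul_const v).const_add p
  exact hf.hasFDerivAt.comp_hasDerivAt t h_line

lemma iteratedDeriv_two_comp_add_smul {p v : V} {t : ℝ} (hf : ContDiffAt ℝ 2 f (p + t • v)) :
    iteratedDeriv 2 (fun s : ℝ => f (p + s • v)) t = fderiv ℝ (fderiv ℝ f) (p + t • v) v v := by
  have h_near : ∀ᶠ s in 𝓝 t, DifferentiableAt ℝ f (p + s • v) :=
    (by fun_prop : Continuous fun s : ℝ => p + s • v).continuousAt.eventually
      ((hf.eventually (by simp)).mono fun q hq => hq.differentiableAt (by simp))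
  have h_deriv : deriv (fun s : ℝ => f (p + s • v)) =ᶠ[𝓝 t] fun s => fderiv ℝ f (p + s • v) v :=
    h_near.mono fun s hs => (hasDerivAt_comp_add_smul_s17 hs).deriv
  have h_diff : DifferentiableAt ℝ (fderiv ℝ f) (p + t • v) :=
    (hf.fderiv_right (m := 1) (by norm_num)).differentiableAt (by simp)
  rw [iteratedDeriv_succ, iteratedDeriv_one, h_deriv.deriv_eq]
  exact ((hasDerivAt_comp_add_smul_s17 h_diff).clm_apply (hasDerivAt_const t v)).deriv.trans (by simp)

lemma iteratedDeriv_two_add_deriv_rpow_mul {k : ℝ → ℝ} {y : ℝ} (hy : 0 < y)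
    (hk : ContDiffAt ℝ 2 k y) (c : ℝ) :
    iteratedDeriv 2 (fun t => t ^ c * k t) y + (1 - c) / y * deriv (fun t => t ^ c * k t) y =
      y ^ c * (iteratedDeriv 2 k y + (1 + c) / y * deriv k y) := by
  have h_rpow : ∀ {t : ℝ} (r : ℝ), 0 < t → HasDerivAt (fun t : ℝ => t ^ r) (r * t ^ (r - 1)) t :=
    fun r ht => Real.hasDerivAt_rpow_const (.inl ht.ne')
  have h_deriv : ∀ᶠ t in 𝓝 y, HasDerivAt (fun t => t ^ c * k t)
      (c * t ^ (c - 1) * k t + t ^ c * deriv k t) t := by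
    filter_upwards [lt_mem_nhds hy, hk.eventually (by simp)] with t ht hkt
    exact (h_rpow c ht).mul (hkt.differentiableAt (by simp)).hasDerivAt
  have hk₁ : HasDerivAt k (deriv k y) y := (hk.differentiableAt (by simp)).hasDerivAt
  have hk₂ : HasDerivAt (deriv k) (iteratedDeriv 2 k y) y := by
    rw [iteratedDeriv_succ, iteratedDeriv_one]
    exact (hk.derivWithin (m := 1) (by norm_num)).differentiableAt (by simp) |>.hasDerivAt
  have h_deriv₂ : iteratedDeriv 2 (fun t => t ^ c * k t) y =
      c * ((c - 1) * y ^ (c - 1 - 1)) * k y + c * y ^ (c - 1) * deriv k y +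
        (c * y ^ (c - 1) * deriv k y + y ^ c * iteratedDeriv 2 k y) := by
    rw [iteratedDeriv_succ, iteratedDeriv_one,
      EventuallyEq.deriv_eq (h_deriv.mono fun t ht => ht.deriv)]
    exact ((((h_rpow (c - 1) hy).const_mul c).mul hk₁).add ((h_rpow c hy).mul hk₂)).deriv
  rw [h_deriv₂, h_deriv.self_of_nhds.deriv, Real.rpow_sub_one hy.ne', Real.rpow_sub_one hy.ne']
  field_simp
  ring

end SecondDerivatives

section NormRpow

variable {V : Type*} [NormedAddCommGroup V] [InnerProductSpace ℝ V] {p : V}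

lemma hasFDerivAt_norm_rpow_of_ne_zero (hp : p ≠ 0) (e : ℝ) :
    HasFDerivAt (fun q : V => ‖q‖ ^ e) ((e * ‖p‖ ^ (e - 2)) • innerSL ℝ p) p := by
  have h_pow : ∀ (q : V) (r : ℝ), (‖q‖ ^ 2) ^ (r / 2) = ‖q‖ ^ r := fun q r => by
    rw [← Real.rpow_natCast_mul (norm_nonneg q), Nat.cast_ofNat, mul_div_cancel₀ r two_ne_zero]
  have h_sq := (hasStrictFDerivAt_norm_sq p).hasFDerivAt.rpow_const (p := e / 2)
    (.inl (by positivity))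
  simp only [h_pow] at h_sq
  refine h_sq.congr_fderiv ?_
  rw [show e / 2 - 1 = (e - 2) / 2 by ring, h_pow, ← Nat.cast_smul_eq_nsmul ℝ, smul_smul]
  congr 1
  push_cast
  ring

lemma fderiv_norm_rpow_of_ne_zero (hp : p ≠ 0) (e : ℝ) :
    fderiv ℝ (fun q : V => ‖q‖ ^ e) p = (e * ‖p‖ ^ (e - 2)) • innerSL ℝ p :=
  (hasFDerivAt_norm_rpow_of_ne_zero hp e).fderiv

lemma fderiv_fderiv_norm_rpow_of_ne_zero (hp : p ≠ 0) (e : ℝ) (v : V) :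
    fderiv ℝ (fderiv ℝ fun q : V => ‖q‖ ^ e) p v v =
      e * ((e - 2) * ‖p‖ ^ (e - 4) * ⟪p, v⟫ ^ 2 + ‖p‖ ^ (e - 2) * ‖v‖ ^ 2) := by
  have h_near : fderiv ℝ (fun q : V => ‖q‖ ^ e) =ᶠ[𝓝 p]
      fun q => (e * ‖q‖ ^ (e - 2)) • innerSL ℝ q := by
    filter_upwards [isOpen_compl_singleton.mem_nhds hp] with q hq
      using fderiv_norm_rpow_of_ne_zero hq e
  have h_deriv : HasFDerivAt (fun q => (e * ‖q‖ ^ (e - 2)) • innerSL ℝ q) _ p :=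
    ((hasFDerivAt_norm_rpow_of_ne_zero hp (e - 2)).const_mul e).smul
      (innerSL ℝ (E := V)).hasFDerivAt
  have h_inner : innerSL ℝ v v = ‖v‖ ^ 2 := real_inner_self_eq_norm_sq v
  rw [h_near.fderiv_eq, h_deriv.fderiv, show e - 4 = e - 2 - 2 by ring]
  simp only [add_apply, smul_apply, ContinuousLinearMap.smulRight_apply, innerSL_apply_apply,
    smul_eq_mul, h_inner]
  ring

lemma isSmoothHomogeneous_norm_rpow (e : ℝ) :
    IsSmoothHomogeneous e (fun q : V => ‖q‖ ^ e) where
  contDiffOn p hp :=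
    ((contDiffAt_id.norm ℝ hp).rpow_const_of_ne (norm_ne_zero_iff.2 hp)).contDiffWithinAt
  map_smul c hc p _ := by
    rw [norm_smul, Real.norm_of_nonneg hc.le, Real.mul_rpow hc.le (norm_nonneg p), smul_eq_mul]

lemma laplacian_eq_sum_fderiv_fderiv [FiniteDimensional ℝ V] {F ι : Type*} [NormedAddCommGroup F]
    [NormedSpace ℝ F] [Fintype ι] (b : OrthonormalBasis ι ℝ V) (f : V → F) (p : V) :
    Δ f p = ∑ i, fderiv ℝ (fderiv ℝ f) p (b i) (b i) := by
  simp [InnerProductSpace.laplacian_eq_iteratedFDeriv_orthonormalBasis f b,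
    iteratedFDeriv_two_apply]

lemma laplacian_norm_rpow [FiniteDimensional ℝ V] (hp : p ≠ 0) (e : ℝ) :
    Δ (fun q : V => ‖q‖ ^ e) p = e * (e + Module.finrank ℝ V - 2) * ‖p‖ ^ (e - 2) := by
  set b := stdOrthonormalBasis ℝ V
  have h_rpow : ‖p‖ ^ (e - 2) = ‖p‖ ^ (e - 4) * ‖p‖ ^ 2 := by
    rw [← Real.rpow_add_natCast (norm_ne_zero_iff.2 hp)]
    norm_num
    ring_nf
  have h_basis : ∑ i, ‖b i‖ ^ 2 = Module.finrank ℝ V := by simp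
  simp_rw [laplacian_eq_sum_fderiv_fderiv b, fderiv_fderiv_norm_rpow_of_ne_zero hp,
    ← Finset.mul_sum, Finset.sum_add_distrib, ← Finset.mul_sum, b.sum_sq_inner_left, h_basis,
    h_rpow]
  ring

end NormRpow

section PotentialNormRpow

variable {X V : Type*} [MeasurableSpace X] [TopologicalSpace X] [OpensMeasurableSpace X]
  [SecondCountableTopology X] [NormedAddCommGroup V] [InnerProductSpace ℝ V]
  [FiniteDimensional ℝ V] {μ : Measure X} {z : X → V} {w : X → ℝ} {e : ℝ} {p : V}

lemma IsSmoothHomogeneous.laplacian_potential {F : Type*} [NormedAddCommGroup F] [NormedSpace ℝ F]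
    [CompleteSpace F] {f : V → F} (hf : IsSmoothHomogeneous e f) (hz : Continuous z)
    (hw : Integrable (fun ξ => (1 + ‖z ξ‖) ^ e * w ξ) μ) (hp : p ∉ closure (range z)) :
    Δ (potential μ z w f) p = potential μ z w (Δ f) p := by
  set b := stdOrthonormalBasis ℝ V
  let trace : (V →L[ℝ] V →L[ℝ] F) →L[ℝ] F := ∑ i,
    (ContinuousLinearMap.apply ℝ F (b i)).comp (ContinuousLinearMap.apply ℝ (V →L[ℝ] F) (b i))
  have h_trace : ∀ (g : V → F) (q : V), Δ g q = trace (fderiv ℝ (fderiv ℝ g) q) := fun g q => by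
    simp [trace, laplacian_eq_sum_fderiv_fderiv b]
  have : ProperSpace V := FiniteDimensional.proper_real V
  have hw' := integrable_weight_of_le hz hw (by linarith : e - 1 - 1 ≤ e)
  rw [h_trace, hf.fderiv_fderiv_potential hz hw hp,
    hf.fderiv.fderiv.continuousLinearMap_potential hz hw' hp]
  simp_rw [← h_trace]

lemma laplacian_potential_norm_rpow (hz : Continuous z)
    (hw : Integrable (fun ξ => (1 + ‖z ξ‖) ^ e * w ξ) μ) (hp : p ∉ closure (range z)) :
    Δ (potential μ z w fun q => ‖q‖ ^ e) p =
      e * (e + Module.finrank ℝ V - 2) * potential μ z w (fun q => ‖q‖ ^ (e - 2)) p := by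
  rw [(isSmoothHomogeneous_norm_rpow e).laplacian_potential hz hw hp,
    potential_congr (fun q hq => laplacian_norm_rpow hq e) hp]
  simp only [potential, smul_eq_mul, mul_left_comm (w _), integral_const_mul]

lemma fderiv_potential_norm_rpow_apply (hz : Continuous z)
    (hw : Integrable (fun ξ => (1 + ‖z ξ‖) ^ e * w ξ) μ) (hp : p ∉ closure (range z)) {v : V}
    (hv : ∀ ξ, ⟪z ξ, v⟫ = 0) :
    fderiv ℝ (potential μ z w fun q => ‖q‖ ^ e) p v =
      e * ⟪p, v⟫ * potential μ z w (fun q => ‖q‖ ^ (e - 2)) p := by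
  have : ProperSpace V := FiniteDimensional.proper_real V
  have hf : IsSmoothHomogeneous e fun q : V => ‖q‖ ^ e := isSmoothHomogeneous_norm_rpow e
  have h_eval := hf.fderiv.continuousLinearMap_potential hz
    (integrable_weight_of_le hz hw (sub_one_lt e).le) hp (ContinuousLinearMap.apply ℝ ℝ v)
  simp only [ContinuousLinearMap.apply_apply] at h_eval
  rw [hf.fderiv_potential hz hw hp, h_eval, potential_congr (fun q hq => congrArg (· v)
    (fderiv_norm_rpow_of_ne_zero hq e)) hp, potential, potential, ← integral_const_mul]
  congr 1 with ξ
  simp only [smul_eq_mul, smul_apply, innerSL_apply_apply, inner_sub_left, hv]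
  ring

lemma laplacian_add_fderiv_potential_norm_rpow (hz : Continuous z)
    (hw : Integrable (fun ξ => (1 + ‖z ξ‖) ^ e * w ξ) μ) (hp : p ∉ closure (range z)) {v : V}
    (hv : ∀ ξ, ⟪z ξ, v⟫ = 0) (hpv : ⟪p, v⟫ ≠ 0) {β : ℝ}
    (he : e + (Module.finrank ℝ V + β) = 2) :
    Δ (potential μ z w fun q => ‖q‖ ^ e) p +
      β / ⟪p, v⟫ * fderiv ℝ (potential μ z w fun q => ‖q‖ ^ e) p v = 0 := by
  rw [laplacian_potential_norm_rpow hz hw hp, fderiv_potential_norm_rpow_apply hz hw hp hv]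
  obtain rfl : β = 2 - e - Module.finrank ℝ V := by linarith
  field_simp
  ring

end PotentialNormRpow

section HalfSpace

open WithLp

variable {E : Type*} [NormedAddCommGroup E]

lemma notMem_closure_range_toLp_zero (x : E) {y : ℝ} (hy : y ≠ 0) :
    toLp 2 (x, y) ∉ closure (range fun ξ : E => toLp 2 (ξ, (0 : ℝ))) := by
  have h_closed : IsClosed {p : WithLp 2 (E × ℝ) | p.snd = 0} :=
    isClosed_eq (by fun_prop) continuous_const
  exact fun h => hy (closure_minimal (by rintro _ ⟨ξ, rfl⟩; rfl) h_closed h)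

section Coordinates

variable [InnerProductSpace ℝ E] {F : Type*} [NormedAddCommGroup F] [NormedSpace ℝ F]
  {K : WithLp 2 (E × ℝ) → F} {x : E} {y : ℝ}

lemma toLp_eq_add_smul_zero_one (x : E) (t : ℝ) :
    toLp 2 (x, t) = toLp 2 (x, (0 : ℝ)) + t • toLp 2 ((0 : E), (1 : ℝ)) := by
  rw [← toLp_smul, ← toLp_add]
  simp

lemma deriv_toLp_eq_fderiv (hK : DifferentiableAt ℝ K (toLp 2 (x, y))) :
    deriv (fun t : ℝ => K (toLp 2 (x, t))) y = fderiv ℝ K (toLp 2 (x, y)) (toLp 2 (0, 1)) := by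
  rw [toLp_eq_add_smul_zero_one x y] at hK ⊢
  rw [funext fun t => congrArg K (toLp_eq_add_smul_zero_one x t)]
  exact (hasDerivAt_comp_add_smul_s17 hK).deriv

lemma laplacian_toLp_eq_sum_iteratedDeriv [FiniteDimensional ℝ E] {ι : Type*} [Fintype ι]
    (b : OrthonormalBasis ι ℝ E) (hK : ContDiffAt ℝ 2 K (toLp 2 (x, y))) :
    Δ K (toLp 2 (x, y)) = ∑ i, iteratedDeriv 2 (fun t : ℝ => K (toLp 2 (x + t • b i, y))) 0 +
      iteratedDeriv 2 (fun t : ℝ => K (toLp 2 (x, t))) y := by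
  have h_horizontal : ∀ i, (fun t : ℝ => K (toLp 2 (x + t • b i, y))) =
      fun t => K (toLp 2 (x, y) + t • toLp 2 (b i, (0 : ℝ))) := fun i => funext fun t => by
    rw [← toLp_smul, ← toLp_add]
    simp
  rw [laplacian_eq_sum_fderiv_fderiv (b.prod (OrthonormalBasis.singleton Unit ℝ)),
    Fintype.sum_sum_type]
  congr 1
  · refine Finset.sum_congr rfl fun i _ => ?_
    rw [h_horizontal, iteratedDeriv_two_comp_add_smul (by simpa using hK)]
    simp
  · rw [toLp_eq_add_smul_zero_one x y] at hK ⊢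
    rw [funext fun t => congrArg K (toLp_eq_add_smul_zero_one x t),
      iteratedDeriv_two_comp_add_smul hK]
    simp

end Coordinates

section BoundaryPotential

variable [MeasurableSpace E]

/-- The potential on `E × ℝ`, with its Euclidean norm, of the kernel `‖q‖ ^ e` and of sources of
density `w` on the hyperplane `E × {0}`. -/
noncomputable def boundaryPotential (μ : Measure E) (w : E → ℝ) (e : ℝ) : WithLp 2 (E × ℝ) → ℝ :=
  potential μ (fun ξ => toLp 2 (ξ, 0)) w fun q => ‖q‖ ^ e

lemma rpow_mul_boundaryPotential (μ : Measure E) (w : E → ℝ) (c s : ℝ) (x : E) (y : ℝ) :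
    y ^ c * boundaryPotential μ w (-s) (toLp 2 (x, y)) =
      ∫ ξ, y ^ c * (‖x - ξ‖ ^ 2 + y ^ 2) ^ (-(s / 2)) * w ξ ∂μ := by
  have h_norm : ∀ ξ, ‖toLp 2 (x, y) - toLp 2 (ξ, (0 : ℝ))‖ ^ (-s) =
      (‖x - ξ‖ ^ 2 + y ^ 2) ^ (-(s / 2)) := fun ξ => by
    have h_sq : ‖toLp 2 (x, y) - toLp 2 (ξ, (0 : ℝ))‖ ^ 2 = ‖x - ξ‖ ^ 2 + y ^ 2 := by
      simp [prod_norm_sq_eq_of_L2]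
    rw [← h_sq, ← Real.rpow_natCast_mul (norm_nonneg _)]
    congr 1
    push_cast
    ring
  simp only [boundaryPotential, potential, ← integral_const_mul, h_norm, smul_eq_mul, mul_assoc,
    mul_comm (w _)]

variable [OpensMeasurableSpace E] [InnerProductSpace ℝ E] [FiniteDimensional ℝ E] {μ : Measure E}
  {w : E → ℝ} {e : ℝ}

lemma contDiffAt_boundaryPotential (hw : Integrable (fun ξ => (1 + ‖ξ‖) ^ e * w ξ) μ) (x : E)
    {y : ℝ} (hy : y ≠ 0) : ContDiffAt ℝ ∞ (boundaryPotential μ w e) (toLp 2 (x, y)) := by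
  have : ProperSpace E := FiniteDimensional.proper_real E
  have : ProperSpace (WithLp 2 (E × ℝ)) := FiniteDimensional.proper_real _
  have h_smooth := (isSmoothHomogeneous_norm_rpow e).contDiffOn_potential
    (z := fun ξ : E => toLp 2 (ξ, (0 : ℝ))) (by fun_prop) (by simpa using hw)
  exact h_smooth.contDiffAt
    (isClosed_closure.isOpen_compl.mem_nhds (notMem_closure_range_toLp_zero x hy))

lemma contDiffOn_rpow_mul_boundaryPotential (hw : Integrable (fun ξ => (1 + ‖ξ‖) ^ e * w ξ) μ)
    (c : ℝ) :
    ContDiffOn ℝ ∞ (fun p : E × ℝ => p.2 ^ c * boundaryPotential μ w e (toLp 2 (p.1, p.2)))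
      (univ ×ˢ Ioi 0) := by
  rintro ⟨x, y⟩ ⟨-, hy : 0 < y⟩
  have h_rpow : ContDiffAt ℝ ∞ (fun p : E × ℝ => p.2 ^ c) (x, y) :=
    contDiffAt_snd.rpow_const_of_ne hy.ne'
  have h_toLp : ContDiffAt ℝ ∞ (fun p : E × ℝ => toLp 2 (p.1, p.2)) (x, y) :=
    (prodContinuousLinearEquiv 2 ℝ E ℝ).symm.contDiff.contDiffAt
  exact (h_rpow.mul ((contDiffAt_boundaryPotential hw x hy.ne').comp (x, y)
    h_toLp)).contDiffWithinAt

lemma sum_iteratedDeriv_add_deriv_boundaryPotential {ι : Type*} [Fintype ι]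
    (b : OrthonormalBasis ι ℝ E) {β : ℝ} (hw : Integrable (fun ξ => (1 + ‖ξ‖) ^ e * w ξ) μ)
    (he : e + (Fintype.card ι + β) = 1) (x : E) {y : ℝ} (hy : y ≠ 0) :
    (∑ i, iteratedDeriv 2 (fun t : ℝ => boundaryPotential μ w e (toLp 2 (x + t • b i, y))) 0) +
      (iteratedDeriv 2 (fun t => boundaryPotential μ w e (toLp 2 (x, t))) y +
        β / y * deriv (fun t => boundaryPotential μ w e (toLp 2 (x, t))) y) = 0 := by
  have : ProperSpace E := FiniteDimensional.proper_real E
  have h_smooth := contDiffAt_boundaryPotential hw x hy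
  have h_dim : e + (Module.finrank ℝ (WithLp 2 (E × ℝ)) + β) = 2 := by
    have h_prod : Module.finrank ℝ (WithLp 2 (E × ℝ)) = Fintype.card ι + 1 := by
      rw [(prodContinuousLinearEquiv 2 ℝ E ℝ).toLinearEquiv.finrank_eq, Module.finrank_prod,
        Module.finrank_eq_card_basis b.toBasis, Module.finrank_self]
    rw [h_prod]
    push_cast
    linarith
  have h_radial := laplacian_add_fderiv_potential_norm_rpow (μ := μ) (w := w)
    (z := fun ξ : E => toLp 2 (ξ, (0 : ℝ))) (v := toLp 2 (0, 1)) (by fun_prop) (by simpa using hw)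
    (notMem_closure_range_toLp_zero x hy) (by simp) (by simpa using hy) h_dim
  rw [← add_assoc, ← laplacian_toLp_eq_sum_iteratedDeriv b (h_smooth.of_le ENat.LEInfty.out),
    deriv_toLp_eq_fderiv (h_smooth.differentiableAt (by simp))]
  simpa [boundaryPotential] using h_radial

end BoundaryPotential

end HalfSpace

theorem stmt_17_general {E ι : Type*} [NormedAddCommGroup E] [InnerProductSpace ℝ E]
    [MeasurableSpace E] [OpensMeasurableSpace E] [Fintype ι] (b : OrthonormalBasis ι ℝ E)
    (μ : Measure E) (γ a : ℝ) (ha : a = 1 - 2 * γ) (w : E → ℝ)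
    (hw : Integrable (fun ξ => (1 + ‖ξ‖) ^ (-(Fintype.card ι + 2 * γ)) * w ξ) μ) (U : E → ℝ → ℝ)
    (hU : ∀ x y, U x y =
      ∫ ξ, y ^ (2 * γ) * (‖x - ξ‖ ^ 2 + y ^ 2) ^ (-((Fintype.card ι + 2 * γ) / 2)) * w ξ ∂μ) :
    ContDiffOn ℝ ∞ (fun p : E × ℝ => U p.1 p.2) (univ ×ˢ Ioi 0) ∧
      ∀ x y, 0 < y → (∑ i, iteratedDeriv 2 (fun t : ℝ => U (x + t • b i) y) 0) +
        iteratedDeriv 2 (U x) y + a / y * deriv (U x) y = 0 := by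
  have : FiniteDimensional ℝ E := b.toBasis.finiteDimensional_of_finite
  set e : ℝ := -(Fintype.card ι + 2 * γ) with he
  obtain rfl : U = fun x y => y ^ (2 * γ) * boundaryPotential μ w e (WithLp.toLp 2 (x, y)) := by
    ext x y
    rw [hU, rpow_mul_boundaryPotential]
  refine ⟨contDiffOn_rpow_mul_boundaryPotential hw (2 * γ), fun x y hy => ?_⟩
  have h_vertical : ContDiffAt ℝ 2 (fun t => boundaryPotential μ w e (WithLp.toLp 2 (x, t))) y := by
    have h_line : ContDiff ℝ 2 fun t : ℝ => WithLp.toLp 2 (x, t) :=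
      (WithLp.prodContinuousLinearEquiv 2 ℝ E ℝ).symm.contDiff.comp (contDiff_prodMk_right x)
    exact ((contDiffAt_boundaryPotential hw x hy.ne').of_le ENat.LEInfty.out).comp y
      h_line.contDiffAt
  have h_laplace := sum_iteratedDeriv_add_deriv_boundaryPotential b (β := 1 + 2 * γ) hw
    (by rw [he]; ring) x hy.ne'
  simp only [iteratedDeriv_const_mul_field, ← Finset.mul_sum]
  rw [add_assoc, ha, iteratedDeriv_two_add_deriv_rpow_mul hy h_vertical, ← mul_add, h_laplace,
    mul_zero]

open MeasureTheory Real in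
theorem stmt_17 (n : ℕ) (hn : 1 ≤ n) (γ : ℝ) (hγ : γ ∈ Set.Ioo (0:ℝ) 1)
    (a : ℝ) (ha : a = 1 - 2*γ)
    (w : EuclideanSpace ℝ (Fin n) → ℝ) (hwc : Continuous w)
    (hwb : ∃ C : ℝ, ∀ x, |w x| ≤ C)
    (U : EuclideanSpace ℝ (Fin n) → ℝ → ℝ)
    (hU : ∀ x : EuclideanSpace ℝ (Fin n), ∀ y : ℝ,
      U x y = ∫ ξ : EuclideanSpace ℝ (Fin n),
        y ^ (2*γ) * (‖x - ξ‖^2 + y^2) ^ (-(((n:ℝ) + 2*γ)/2)) * w ξ) :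
    ContDiffOn ℝ (⊤ : ℕ∞) (fun p : EuclideanSpace ℝ (Fin n) × ℝ => U p.1 p.2)
      (Set.univ ×ˢ Set.Ioi 0) ∧
    ∀ x : EuclideanSpace ℝ (Fin n), ∀ y : ℝ, 0 < y →
      (∑ i : Fin n,
        iteratedDeriv 2 (fun t : ℝ => U (x + t • EuclideanSpace.single i 1) y) 0)
      + iteratedDeriv 2 (U x) y + (a / y) * deriv (U x) y = 0 := by
  obtain ⟨C, hC⟩ := hwb
  have h_weight : Integrable (fun ξ => (1 + ‖ξ‖) ^ (-((n : ℝ) + 2 * γ)) * w ξ) :=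
    (integrable_one_add_norm (by simpa using hγ.1)).mul_bdd hwc.aestronglyMeasurable
      (.of_forall hC)
  simpa using stmt_17_general (EuclideanSpace.basisFun (Fin n) ℝ) volume γ a ha w
    (by simpa using h_weight) U (by simpa using hU)
end

section
/- For every real number n ≥ 6 and every real number a ∈ (−1,1), the quantity θ(n,a) := [15n⁵ − 90n⁴ + (−10a² + 20a + 90)n³ + (20a² − 40a + 300)n² + (3a⁴ − 12a³ + 38a² − 52a − 585)n + (a+1)(6a³ − 30a² − 114a + 270)] / [10·n·(n+2)·(n−3)·(3−a)·(a+1)] is strictly positive. Equivalently, since the denominator is positive for n ≥ 6 and a ∈ (−1,1), the numerator polynomial is strictly positive there. -/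
/-!
At `a = -1` the numerator of `θ(n, a)` factors as `15 n (n + 2) (n - 2)² (n - 4)`, which is
nonnegative for `n ≥ 4`. The remainder is `a + 1` times a cofactor which is strictly positive
for `n ≥ 4` and `-1 ≤ a ≤ 1`. The bound `n ≥ 4` is sharp, since for `2 < n < 4` the factored
numerator is negative, hence so is the numerator for `a` close to `-1`.
-/

/-- The numerator of `θ(n, a)`. -/
def thetaNum {R : Type*} [CommRing R] (n a : R) : R :=
  15 * n ^ 5 - 90 * n ^ 4 + (-10 * a ^ 2 + 20 * a + 90) * n ^ 3
    + (20 * a ^ 2 - 40 * a + 300) * n ^ 2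
    + (3 * a ^ 4 - 12 * a ^ 3 + 38 * a ^ 2 - 52 * a - 585) * n
    + (a + 1) * (6 * a ^ 3 - 30 * a ^ 2 - 114 * a + 270)

/-- The denominator of `θ(n, a)`. -/
def thetaDen {R : Type*} [CommRing R] (n a : R) : R :=
  10 * n * (n + 2) * (n - 3) * (3 - a) * (a + 1)

/-- The cofactor of `a + 1` in `thetaNum n a - thetaNum n (-1)`. -/
def thetaCofactor {R : Type*} [CommRing R] (n a : R) : R :=
  (3 - a) * n * (10 * (n - 1) ^ 2 - 3 * (1 - a) ^ 2 - 42) + 6 * (a ^ 3 - 5 * a ^ 2 - 19 * a + 45)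

theorem thetaNum_neg_one {R : Type*} [CommRing R] (n : R) :
    thetaNum n (-1) = 15 * n * (n + 2) * (n - 2) ^ 2 * (n - 4) := by
  unfold thetaNum
  ring

theorem thetaNum_eq_add_mul_thetaCofactor {R : Type*} [CommRing R] (n a : R) :
    thetaNum n a = thetaNum n (-1) + (a + 1) * thetaCofactor n a := by
  unfold thetaNum thetaCofactor
  ring

section Positivity

variable {R : Type*} [CommRing R] [LinearOrder R] [IsStrictOrderedRing R] {n a : R}

theorem thetaNum_neg_one_nonneg (hn : 4 ≤ n) : 0 ≤ thetaNum n (-1) := by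
  have hn_pos : 0 < n := by linarith
  have hn_sub : 0 ≤ n - 4 := sub_nonneg.mpr hn
  rw [thetaNum_neg_one]
  positivity

theorem thetaCofactor_pos (hn : 4 ≤ n) (ha : a ∈ Set.Icc (-1) 1) : 0 < thetaCofactor n a := by
  obtain ⟨ha_lower, ha_upper⟩ := ha
  have hn_pos : 0 < n := by linarith
  have three_sub_pos : 0 < 3 - a := by linarith
  have quadratic_pos : 0 < 10 * (n - 1) ^ 2 - 3 * (1 - a) ^ 2 - 42 := by
    have hn_sq : 3 ^ 2 ≤ (n - 1) ^ 2 := pow_le_pow_left₀ (by norm_num) (by linarith) 2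
    have ha_sq : (1 - a) ^ 2 ≤ 2 ^ 2 := pow_le_pow_left₀ (by linarith) (by linarith) 2
    linarith
  have cubic_pos : 0 < a ^ 3 - 5 * a ^ 2 - 19 * a + 45 := by
    have ha_sq : (2 - a) ^ 2 ≤ 3 ^ 2 := pow_le_pow_left₀ (by linarith) (by linarith) 2
    calc
      0 < (1 - a) * (27 - (2 - a) ^ 2) + 22 :=
        add_pos_of_nonneg_of_pos (mul_nonneg (by linarith) (by linarith)) (by norm_num)
      _ = a ^ 3 - 5 * a ^ 2 - 19 * a + 45 := by ring
  unfold thetaCofactor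
  positivity

theorem thetaNum_pos (hn : 4 ≤ n) (ha : a ∈ Set.Ioc (-1) 1) : 0 < thetaNum n a := by
  rw [thetaNum_eq_add_mul_thetaCofactor]
  have add_one_pos : 0 < a + 1 := by linarith [ha.1]
  exact add_pos_of_nonneg_of_pos (thetaNum_neg_one_nonneg hn)
    (mul_pos add_one_pos (thetaCofactor_pos hn (Set.Ioc_subset_Icc_self ha)))

theorem thetaDen_pos (hn : 3 < n) (ha : a ∈ Set.Ioo (-1) 3) : 0 < thetaDen n a := by
  obtain ⟨ha_lower, ha_upper⟩ := ha
  have hn_pos : 0 < n := by linarith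
  have hn_sub : 0 < n - 3 := sub_pos.mpr hn
  have three_sub_pos : 0 < 3 - a := sub_pos.mpr ha_upper
  have add_one_pos : 0 < a + 1 := by linarith
  unfold thetaDen
  positivity

end Positivity

theorem stmt_18_general {K : Type*} [Field K] [LinearOrder K] [IsStrictOrderedRing K] {n a : K}
    (hn : 4 ≤ n) (ha : a ∈ Set.Ioc (-1) 1) :
    0 < thetaNum n a / thetaDen n a ∧ 0 < thetaNum n a := by
  have num_pos : 0 < thetaNum n a := thetaNum_pos hn ha
  have den_pos : 0 < thetaDen n a :=
    thetaDen_pos (by linarith) ⟨ha.1, by linarith [ha.2]⟩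
  exact ⟨div_pos num_pos den_pos, num_pos⟩

/-- positivity of θ(n,a) for n ≥ 6, a ∈ (-1,1): both the rational
expression and its numerator are strictly positive. -/
theorem stmt_18 (n a : ℝ) (hn : 6 ≤ n) (ha : a ∈ Set.Ioo (-1:ℝ) 1) :
    0 < (15*n^5 - 90*n^4 + (-10*a^2 + 20*a + 90)*n^3 + (20*a^2 - 40*a + 300)*n^2
        + (3*a^4 - 12*a^3 + 38*a^2 - 52*a - 585)*n + (a+1)*(6*a^3 - 30*a^2 - 114*a + 270))
      / (10*n*(n+2)*(n-3)*(3-a)*(a+1)) ∧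
    0 < 15*n^5 - 90*n^4 + (-10*a^2 + 20*a + 90)*n^3 + (20*a^2 - 40*a + 300)*n^2
        + (3*a^4 - 12*a^3 + 38*a^2 - 52*a - 585)*n + (a+1)*(6*a^3 - 30*a^2 - 114*a + 270) :=
  stmt_18_general (by linarith) (Set.Ioo_subset_Ioc_self ha)
end
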